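/- arXiv:cs/0701070 — 7 statements merged into one kernel-verified Lean document; each statement's English description precedes it below -/
import Mathlib

section
/- The elimination of the variables Z_1,…,Z_w from I_σ + I_S yields exactly the Newton ideal: (I_σ + I_S) ∩ F_2[σ_1,…,σ_w, S_0,…,S_{n−1}] = I_{N,w}. -/
/-!
Let `A` be an `F₂`-algebra with elements `z₁,…,z_w`, and let `φ : R → A` send `σ_j` to `e_j(z)`.
By Newton's identities, `φ` kills the Newton polynomials of index `1,…,n+w` if and only if
`φ(S_i) = ∑_j z_j^i` for all these `i` (`newtonPoly_map_eq_zero_iff`): each Newton polynomial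
determines `S_i` from the `S_k` with `1 ≤ k < i`, and the power sums satisfy the same recursion.

* With `A = R'/(I_σ + I_S)` this gives `I_{N,w} ⊆ (I_σ + I_S) ∩ R`.
* For the other inclusion let `Q = R/I_{N,w}`. The monic polynomial
  `T^w + σ₁ T^{w-1} + ⋯ + σ_w` over `Q` splits in a nonzero finite free extension `A` of `Q`
  (`exists_splitting`), which yields `z₁,…,z_w ∈ A` with `e_j(z) = σ_j`. The lemma gives
  `S_i = ∑_j z_j^i` in `A`, so `Z_j ↦ z_j` defines a map `R'/(I_σ + I_S) → A` extending
  `R → Q → A`. As `Q → A` is injective, an element of `(I_σ + I_S) ∩ R` vanishes in `Q`.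
-/

open MvPolynomial

noncomputable section

abbrev F2 : Type := ZMod 2

/-- `K` is an algebraic closure of `F₂`. -/
abbrev K : Type := AlgebraicClosure F2

/-- The variable `S_i` (index read modulo `n`) of the polynomial ring
`R = F₂[σ₁,…,σ_w, S₀,…,S_{n−1}]`, whose variables are indexed by `Fin w ⊕ ZMod n`
(`Sum.inl i` is `σ_{i+1}`, `Sum.inr i` is `S_i`). -/
def Sv (n w : ℕ) (i : ℕ) : MvPolynomial (Fin w ⊕ ZMod n) F2 :=
  X (Sum.inr (i : ZMod n))

/-- The variable `σ_j` for `1 ≤ j ≤ w`, and `0` otherwise. -/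
def sigv (n w : ℕ) (j : ℕ) : MvPolynomial (Fin w ⊕ ZMod n) F2 :=
  if h : 1 ≤ j ∧ j ≤ w then X (Sum.inl ⟨j - 1, by omega⟩) else 0

/-- The `i`-th Newton identity polynomial:
`S_i + ∑_{j=1}^{i−1} σ_j S_{i−j} + i·σ_i` for `i ≤ w`, and
`S_i + ∑_{j=1}^{w} σ_j S_{i−j}` for `i > w` (indices of the `S` variables read modulo `n`;
over `F₂`, `+` and `−` coincide and `i·σ_i` is `σ_i` for odd `i` and `0` for even `i`). -/
def newtonPoly (n w : ℕ) (i : ℕ) : MvPolynomial (Fin w ⊕ ZMod n) F2 :=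
  if i ≤ w then
    Sv n w i + (∑ j ∈ Finset.Ico 1 i, sigv n w j * Sv n w (i - j))
      + (i : MvPolynomial (Fin w ⊕ ZMod n) F2) * sigv n w i
  else
    Sv n w i + ∑ j ∈ Finset.Icc 1 w, sigv n w j * Sv n w (i - j)

/-- The Newton ideal `I_{N,w}`, generated by the Newton identity polynomials
for `1 ≤ i ≤ n + w`. -/
def newtonIdeal (n w : ℕ) : Ideal (MvPolynomial (Fin w ⊕ ZMod n) F2) :=
  Ideal.span (newtonPoly n w '' Set.Icc 1 (n + w))

/-- Variables of `R' = F₂[σ₁,…,σ_w, S₀,…,S_{n−1}, Z₁,…,Z_w]`: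
`Sum.inl i` is `σ_{i+1}`, `Sum.inr (Sum.inl i)` is `S_i`, `Sum.inr (Sum.inr j)` is `Z_{j+1}`. -/
abbrev Vars' (n w : ℕ) : Type := Fin w ⊕ (ZMod n ⊕ Fin w)

/-- The embedding of the variables of `R = F₂[σ, S]` into the variables of `R'`. -/
def emb (n w : ℕ) : (Fin w ⊕ ZMod n) → Vars' n w := Sum.map id Sum.inl

/-- The ideal `I_σ` of `R'`, generated by `σ_i − e_i(Z₁,…,Z_w)` for `1 ≤ i ≤ w`,
where `e_i` is the `i`-th elementary symmetric polynomial. -/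
def Isig (n w : ℕ) : Ideal (MvPolynomial (Vars' n w) F2) :=
  Ideal.span (Set.range fun i : Fin w =>
    X (Sum.inl i) -
      rename (fun j : Fin w => Sum.inr (Sum.inr j)) (esymm (Fin w) F2 ((i : ℕ) + 1)))

/-- The ideal `I_S` of `R'`, generated by `S_{i mod n} − ∑_{j=1}^w Z_j^i`
for `1 ≤ i ≤ n + w` (indices of the `S` variables read modulo `n`). -/
def IS (n w : ℕ) : Ideal (MvPolynomial (Vars' n w) F2) :=
  Ideal.span ((fun i : ℕ =>
      X (Sum.inr (Sum.inl (i : ZMod n))) - ∑ j : Fin w, X (Sum.inr (Sum.inr j)) ^ i)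
    '' Set.Icc 1 (n + w))

/-- `Δ = Z₁⋯Z_w · ∏_{1 ≤ i < j ≤ w} (Z_i − Z_j) ∈ R'`. -/
def Delta (n w : ℕ) : MvPolynomial (Vars' n w) F2 :=
  (∏ j : Fin w, X (Sum.inr (Sum.inr j))) *
    ∏ p ∈ Finset.univ.filter (fun p : Fin w × Fin w => p.1 < p.2),
      (X (Sum.inr (Sum.inr p.1)) - X (Sum.inr (Sum.inr p.2)))

end

/-- The two cases in the definition of `newtonPoly` agree, since `σ_j = 0` for `j > w`. -/
theorem newtonPoly_eq (n w i : ℕ) :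
    newtonPoly n w i = Sv n w i + (∑ j ∈ Finset.Ico 1 i, sigv n w j * Sv n w (i - j))
      + (i : MvPolynomial (Fin w ⊕ ZMod n) F2) * sigv n w i := by
  unfold newtonPoly
  split_ifs with h
  · rfl
  · have h0 : ∀ j, w < j → sigv n w j = 0 := fun j hj => by
      unfold sigv
      rw [dif_neg (by omega)]
    rw [h0 i (by omega), mul_zero, add_zero]
    congr 1
    apply Finset.sum_subset
    · intro j hj
      simp only [Finset.mem_Icc, Finset.mem_Ico] at hj ⊢
      omega
    · intro j hj hj'
      simp only [Finset.mem_Icc, Finset.mem_Ico] at hj hj'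
      rw [h0 j (by omega), zero_mul]

/-- Newton's identities in characteristic two, evaluated at `z`. -/
theorem newton_identity_char_two {A : Type*} [CommRing A] [Algebra F2 A] {w : ℕ} (z : Fin w → A)
    {k : ℕ} (hk : 1 ≤ k) :
    (∑ l, z l ^ k)
      + (∑ j ∈ Finset.Ico 1 k, aeval z (esymm (Fin w) F2 j) * ∑ l, z l ^ (k - j))
      + (k : A) * aeval z (esymm (Fin w) F2 k) = 0 := by
  have hpoly : (k : MvPolynomial (Fin w) F2) * esymm (Fin w) F2 k
      = ∑ j ∈ Finset.range k, esymm (Fin w) F2 j * psum (Fin w) F2 (k - j) := by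
    have h1 : (-1 : MvPolynomial (Fin w) F2) = 1 := CharTwo.neg_eq 1
    rw [mul_esymm_eq_sum]
    simp only [h1, one_pow, one_mul]
    rw [Finset.sum_filter, Finset.Nat.sum_antidiagonal_eq_sum_range_succ_mk, Finset.sum_range_succ]
    simp only [lt_irrefl, if_false, add_zero]
    exact Finset.sum_congr rfl fun j hj => if_pos (Finset.mem_range.mp hj)
  have h := congrArg (aeval z) hpoly
  rw [Finset.range_eq_Ico, Finset.sum_eq_sum_Ico_succ_bot (by omega)] at h
  simp only [map_mul, map_natCast, map_add, map_sum, esymm_zero, one_mul, psum, map_pow,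
    aeval_X, Nat.sub_zero, zero_add] at h
  rw [h]
  have h2 : (2 : A) = 0 := by
    have := map_ofNat (algebraMap F2 A) 2
    rw [← this, show (OfNat.ofNat 2 : F2) = 0 from rfl, map_zero]
  linear_combination ((∑ l, z l ^ k)
      + (∑ j ∈ Finset.Ico 1 k, aeval z (esymm (Fin w) F2 j) * ∑ l, z l ^ (k - j))) * h2

/-- If the `σ_j` are mapped to the elementary symmetric functions of `z`, then the Newton
polynomials vanish exactly when the `S_i` are mapped to the power sums of `z`. -/
theorem newtonPoly_map_eq_zero_iff {n w : ℕ} {A : Type*} [CommRing A] [Algebra F2 A]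
    (z : Fin w → A) (φ : MvPolynomial (Fin w ⊕ ZMod n) F2 →ₐ[F2] A)
    (hσ : ∀ i : Fin w, φ (X (Sum.inl i)) = aeval z (esymm (Fin w) F2 ((i : ℕ) + 1))) (N : ℕ) :
    (∀ i ∈ Set.Icc 1 N, φ (newtonPoly n w i) = 0) ↔
      ∀ i ∈ Set.Icc 1 N, φ (X (Sum.inr (i : ZMod n))) = ∑ l, z l ^ i := by
  have hsig : ∀ j, 1 ≤ j → φ (sigv n w j) = aeval z (esymm (Fin w) F2 j) := by
    intro j hj
    unfold sigv
    split_ifs with h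
    · rw [hσ]
      simp only [Nat.sub_add_cancel hj]
    · rw [esymm, Finset.powersetCard_eq_empty.mpr (by simp; omega)]
      simp
  have key : ∀ i : ℕ, 1 ≤ i → (∀ k : ℕ, 1 ≤ k → k < i → φ (X (Sum.inr (k : ZMod n))) = ∑ l, z l ^ k) →
      φ (newtonPoly n w i) = φ (X (Sum.inr (i : ZMod n))) - ∑ l, z l ^ i := by
    intro i hi hlt
    have hN := newton_identity_char_two z hi
    have hs : ∑ j ∈ Finset.Ico 1 i, φ (sigv n w j) * φ (Sv n w (i - j))
        = ∑ j ∈ Finset.Ico 1 i, aeval z (esymm (Fin w) F2 j) * ∑ l, z l ^ (i - j) := by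
      refine Finset.sum_congr rfl fun j hj => ?_
      rw [Finset.mem_Ico] at hj
      rw [hsig j hj.1, Sv, hlt (i - j) (by omega) (by omega)]
    rw [newtonPoly_eq]
    simp only [map_add, map_sum, map_mul, map_natCast]
    rw [hs, hsig i hi, Sv]
    linear_combination hN
  constructor
  · intro h i
    induction i using Nat.strong_induction_on with
    | _ i ih =>
      intro hi
      have := key i hi.1 fun k hk hki => ih k hki ⟨hk, hki.le.trans hi.2⟩
      rw [h i hi] at this
      exact (sub_eq_zero.mp this.symm)
  · intro h i hi
    rw [key i hi.1 fun k hk hki => h k ⟨hk, hki.le.trans hi.2⟩, h i hi, sub_self]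

/-- Any elements `c₁,…,c_w` of a nonzero ring `Q` are the elementary symmetric functions of some
`z₁,…,z_w` in an extension ring of `Q`. -/
theorem exists_splitting {Q : Type} [CommRing Q] [Nontrivial Q] {w : ℕ} (c : Fin w → Q) :
    ∃ (A : Type) (_ : CommRing A) (_ : Algebra Q A) (z : Fin w → A),
      Function.Injective (algebraMap Q A) ∧
      ∀ i : Fin w, algebraMap Q A (c i) = (Finset.univ.val.map z).esymm ((i : ℕ) + 1) := by
  -- The coefficient of `T ^ i` is `c_{w-i}`, which has index `w - 1 - i` in `Fin w`.
  set r : Polynomial Q := ∑ i : Fin w, Polynomial.C (c i.rev) * Polynomial.X ^ (i : ℕ) with hr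
  have hrdeg : r.degree < (w : WithBot ℕ) := by
    refine (Polynomial.degree_sum_le _ _).trans_lt ?_
    refine (Finset.sup_lt_iff (WithBot.bot_lt_coe w)).mpr fun i _ => ?_
    exact (Polynomial.degree_C_mul_X_pow_le _ _).trans_lt (WithBot.coe_lt_coe.mpr i.2)
  have hmonic : (Polynomial.X ^ w + r).Monic := Polynomial.monic_X_pow_add hrdeg
  have hdeg : (Polynomial.X ^ w + r).natDegree = w :=
    Polynomial.natDegree_eq_of_degree_eq_some (by
      rw [Polynomial.degree_add_eq_left_of_degree_lt (by rwa [Polynomial.degree_X_pow]),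
        Polynomial.degree_X_pow])
  have hcoeff : ∀ i : Fin w, (Polynomial.X ^ w + r).coeff (i : ℕ) = c i.rev := by
    intro i
    rw [Polynomial.coeff_add, Polynomial.coeff_X_pow, if_neg i.2.ne, zero_add, hr,
      Polynomial.finsetSum_coeff]
    simp only [Polynomial.coeff_C_mul_X_pow, Fin.val_inj]
    simp
  obtain ⟨A, _, _, _, _, _, hsplit⟩ := hmonic.exists_splits_map
  obtain ⟨s, hs⟩ := Polynomial.splits_iff_exists_multiset'.mp hsplit
  rw [(hmonic.map _).leadingCoeff, Polynomial.C_1, one_mul] at hs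
  have hcard : Multiset.card s = w := by
    have := congrArg Polynomial.natDegree hs
    rw [hmonic.natDegree_map, hdeg, Polynomial.natDegree_multiset_prod_of_monic] at this
    · simpa using this.symm
    · intro f hf
      obtain ⟨a, -, rfl⟩ := Multiset.mem_map.mp hf
      exact Polynomial.monic_X_add_C a
  obtain ⟨z, hz⟩ : ∃ z : Fin w → A, Finset.univ.val.map z = s := by
    obtain ⟨l, rfl⟩ := Quot.exists_rep s
    have hl : l.length = w := hcard
    subst hl
    refine ⟨l.get, ?_⟩
    rw [Fin.univ_val_map, List.ofFn_get]
    rfl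
  refine ⟨A, inferInstance, inferInstance, z, FaithfulSMul.algebraMap_injective Q A, fun i => ?_⟩
  have h := congrArg (fun f => Polynomial.coeff f (i.rev : ℕ)) hs
  simp only [Polynomial.coeff_map, hcoeff, Fin.rev_rev] at h
  rw [h, hz, Multiset.prod_X_add_C_coeff s (by rw [hcard]; exact i.rev.2.le), hcard]
  congr 1
  rw [Fin.val_rev]
  omega

/-- Every Newton polynomial lies in `I_σ + I_S`. -/
theorem newtonIdeal_le_comap (n w : ℕ) :
    newtonIdeal n w ≤ (Isig n w + IS n w).comap (rename (emb n w)) := by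
  set J := Isig n w + IS n w with hJ
  let π := Ideal.Quotient.mkₐ F2 J
  let φ : MvPolynomial (Fin w ⊕ ZMod n) F2 →ₐ[F2] _ := π.comp (rename (emb n w))
  let z : Fin w → (MvPolynomial (Vars' n w) F2 ⧸ J) := fun j => π (X (Sum.inr (Sum.inr j)))
  have hσ : ∀ i : Fin w, φ (X (Sum.inl i)) = aeval z (esymm (Fin w) F2 ((i : ℕ) + 1)) := by
    intro i
    have hmem : X (Sum.inl i) - rename (fun j : Fin w => Sum.inr (Sum.inr j))
        (esymm (Fin w) F2 ((i : ℕ) + 1)) ∈ J :=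
      Ideal.mem_sup_left (Ideal.subset_span ⟨i, rfl⟩)
    have hz : aeval z = π.comp (rename fun j : Fin w => Sum.inr (Sum.inr j)) := by
      ext j
      simp [z]
    rw [hz]
    simpa [φ, emb, π] using Ideal.Quotient.eq.mpr hmem
  have hS : ∀ i ∈ Set.Icc 1 (n + w), φ (X (Sum.inr (i : ZMod n))) = ∑ l, z l ^ i := by
    intro i hi
    have hmem : X (Sum.inr (Sum.inl (i : ZMod n))) - ∑ j : Fin w, X (Sum.inr (Sum.inr j)) ^ i ∈ J :=
      Ideal.mem_sup_right (Ideal.subset_span ⟨i, hi, rfl⟩)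
    have := Ideal.Quotient.eq.mpr hmem
    rw [map_sum] at this
    simpa [φ, emb, z, π] using this
  rw [newtonIdeal, Ideal.span_le]
  rintro _ ⟨i, hi, rfl⟩
  exact (Ideal.Quotient.eq_zero_iff_mem (I := J)).mp
    ((newtonPoly_map_eq_zero_iff z φ hσ (n + w)).mpr hS i hi)

/-- A polynomial in `σ, S` lying in `I_σ + I_S` lies in the Newton ideal. -/
theorem comap_le_newtonIdeal (n w : ℕ) :
    (Isig n w + IS n w).comap (rename (emb n w)) ≤ newtonIdeal n w := by
  intro p hp
  rw [Ideal.mem_comap] at hp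
  by_cases htop : newtonIdeal n w = ⊤
  · rw [htop]
    trivial
  have : Nontrivial (MvPolynomial (Fin w ⊕ ZMod n) F2 ⧸ newtonIdeal n w) :=
    Ideal.Quotient.nontrivial_iff.mpr htop
  let π := Ideal.Quotient.mkₐ F2 (newtonIdeal n w)
  obtain ⟨A, _, _, z, hinj, hz⟩ := exists_splitting fun i : Fin w => π (X (Sum.inl i))
  let _ : Algebra F2 A := ((algebraMap _ A).comp (algebraMap F2
    (MvPolynomial (Fin w ⊕ ZMod n) F2 ⧸ newtonIdeal n w))).toAlgebra
  let φ : MvPolynomial (Fin w ⊕ ZMod n) F2 →ₐ[F2] A :=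
    { (algebraMap _ A).comp (Ideal.Quotient.mk (newtonIdeal n w)) with commutes' := fun _ => rfl }
  have hφ : ∀ q, φ q = 0 ↔ q ∈ newtonIdeal n w := by
    intro q
    rw [← Ideal.Quotient.eq_zero_iff_mem]
    exact map_eq_zero_iff _ hinj
  have hσ : ∀ i : Fin w, φ (X (Sum.inl i)) = aeval z (esymm (Fin w) F2 ((i : ℕ) + 1)) := by
    intro i
    rw [aeval_esymm_eq_multiset_esymm]
    exact hz i
  have hS := (newtonPoly_map_eq_zero_iff z φ hσ (n + w)).mp fun i hi =>
    (hφ _).mpr (Ideal.subset_span ⟨i, hi, rfl⟩)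
  let ψ : MvPolynomial (Vars' n w) F2 →ₐ[F2] A :=
    aeval (Sum.elim (fun i => φ (X (Sum.inl i))) (Sum.elim (fun i => φ (X (Sum.inr i))) z))
  have hψ : ψ.comp (rename (emb n w)) = φ := by
    ext (i | i) <;> simp [ψ, emb]
  have hker : Isig n w + IS n w ≤ RingHom.ker ψ := by
    refine sup_le ?_ ?_
    · rw [Isig, Ideal.span_le]
      rintro _ ⟨i, rfl⟩
      have hcomp : ψ.comp (rename fun j : Fin w => (Sum.inr (Sum.inr j) : Vars' n w))
          = aeval z := by
        ext j
        simp [ψ]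
      have hren : ψ (rename (fun j : Fin w => (Sum.inr (Sum.inr j) : Vars' n w))
          (esymm (Fin w) F2 ((i : ℕ) + 1))) = aeval z (esymm (Fin w) F2 ((i : ℕ) + 1)) :=
        DFunLike.congr_fun hcomp _
      rw [SetLike.mem_coe, RingHom.mem_ker, map_sub, hren, ← hσ i]
      simp [ψ]
    · rw [IS, Ideal.span_le]
      rintro _ ⟨i, hi, rfl⟩
      rw [SetLike.mem_coe, RingHom.mem_ker, map_sub, map_sum]
      simp only [map_pow]
      rw [sub_eq_zero]
      simpa [ψ] using hS i hi
  rw [← hφ, ← hψ]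
  exact RingHom.mem_ker.mp (hker hp)

/-- eliminating the variables `Z₁,…,Z_w` from `I_σ + I_S` yields exactly the
Newton ideal: a polynomial `p ∈ R = F₂[σ, S]`, viewed in `R'`, belongs to `I_σ + I_S`
if and only if `p ∈ I_{N,w}`. -/
theorem elimination_eq_newtonIdeal (n m w : ℕ) [NeZero n] (hodd : Odd n) (hm : 0 < m)
    (hdvd : n ∣ 2 ^ m - 1) (hw1 : 1 ≤ w) (hwn : w ≤ n)
    (α : K) (hα : IsPrimitiveRoot α n)
    (p : MvPolynomial (Fin w ⊕ ZMod n) F2) :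
    MvPolynomial.rename (emb n w) p ∈ Isig n w + IS n w ↔ p ∈ newtonIdeal n w :=
  ⟨fun h => comap_le_newtonIdeal n w h, fun h => newtonIdeal_le_comap n w h⟩
end

section
/- The saturated ideal (I_σ + I_S) : Δ^∞ of R' contains the polynomials Z_i^{n+1} + Z_i for 1 ≤ i ≤ w (equivalently, since Z_i divides Δ, the polynomials Z_i^n + 1), the polynomials σ_i^{2^m} + σ_i for 1 ≤ i ≤ w, and the polynomials S_i^{2^m} + S_i for 0 ≤ i ≤ n−1. -/
/-!
Membership in `(I_σ + I_S) : Δ^∞` means vanishing in the localization of `R' / (I_σ + I_S)` at `Δ`.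
So let `φ : R' → B` be a homomorphism of `F₂`-algebras that kills both ideals and makes `Δ`
invertible, and put `z_j = φ(Z_j)`. For `1 ≤ i ≤ w` the generators of `I_S` with indices `i` and
`i + n` involve the same variable `S_i`, so `∑_j z_j^i (z_j^n - 1) = 0`. The matrix of this linear
system in the unknowns `z_j^n - 1` is a Vandermonde matrix whose determinant is `Δ` up to sign,
whence `z_j^n = 1` (`image_Z_pow`). Since `n ∣ 2^m - 1`, each `z_j` is fixed by the `m`-th iterate
of the Frobenius, hence so is every polynomial expression in the `z_j` over `F₂`
(`aeval_pow_two_pow`), in particular the images of all `σ_i` and `S_i`.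
-/

open MvPolynomial

/-- If every `z_j` satisfies `z_j^(2^m) = z_j`, then so does every element of `F₂[z]`: the `m`-th
iterate of the Frobenius is an `F₂`-algebra homomorphism, determined by its values on the `z_j`. -/
lemma aeval_pow_two_pow {B ι : Type*} [CommRing B] [Algebra F2 B] (m : ℕ) (z : ι → B)
    (hz : ∀ j, z j ^ 2 ^ m = z j) (p : MvPolynomial ι F2) :
    aeval z p ^ 2 ^ m = aeval z p := by
  have key : ∀ x : B, (FiniteField.frobeniusAlgHom F2 B ^ m) x = x ^ 2 ^ m := by
    intro x
    rw [AlgHom.coe_pow, FiniteField.coe_frobeniusAlgHom, pow_iterate, ZMod.card]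
  have h : ((FiniteField.frobeniusAlgHom F2 B ^ m).comp (aeval z)) = aeval z := by
    refine MvPolynomial.algHom_ext fun j => ?_
    rw [AlgHom.comp_apply, key, aeval_X, hz]
  rw [← key]
  exact DFunLike.congr_fun h p

section

variable {n w : ℕ} {B : Type*} [CommRing B] [Algebra F2 B]
  (φ : MvPolynomial (Vars' n w) F2 →ₐ[F2] B)

lemma image_S (hS : ∀ f ∈ IS n w, φ f = 0) {i : ℕ} (h1 : 1 ≤ i) (h2 : i ≤ n + w) :
    φ (X (Sum.inr (Sum.inl (i : ZMod n)))) = ∑ j : Fin w, φ (X (Sum.inr (Sum.inr j))) ^ i := by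
  have h := hS _ (Ideal.subset_span ⟨i, ⟨h1, h2⟩, rfl⟩)
  simpa [sub_eq_zero] using h

lemma image_sigma (hσ : ∀ f ∈ Isig n w, φ f = 0) (i : Fin w) :
    φ (X (Sum.inl i)) =
      aeval (fun j : Fin w => φ (X (Sum.inr (Sum.inr j)))) (esymm (Fin w) F2 ((i : ℕ) + 1)) := by
  have h := hσ _ (Ideal.subset_span ⟨i, rfl⟩)
  rw [map_sub, sub_eq_zero] at h
  rw [h, ← AlgHom.comp_apply]
  refine DFunLike.congr_fun ?_ _
  ext j
  simp

/-- Wherever `Δ` becomes invertible, the equations of `I_S` with indices `1, …, w` and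
`n + 1, …, n + w` form an invertible Vandermonde system that forces `Z_j^n = 1`. -/
lemma image_Z_pow (hS : ∀ f ∈ IS n w, φ f = 0) (hΔ : IsUnit (φ (Delta n w))) (j : Fin w) :
    φ (X (Sum.inr (Sum.inr j))) ^ n = 1 := by
  set z : Fin w → B := fun j => φ (X (Sum.inr (Sum.inr j))) with hz
  simp only [Delta, map_mul, map_prod, map_sub] at hΔ
  obtain ⟨hΔ1, hΔ2⟩ := IsUnit.mul_iff.1 hΔ
  have hunit : ∀ j, IsUnit (z j) := fun j => IsUnit.prod_iff.1 hΔ1 j (Finset.mem_univ j)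
  have hdiff : ∀ i j : Fin w, i < j → IsUnit (z i - z j) := fun i j hij =>
    IsUnit.prod_iff.1 hΔ2 (i, j) (by simp [hij])
  have hdet : IsUnit (Matrix.vandermonde z).det := by
    rw [Matrix.det_vandermonde]
    refine IsUnit.prod_iff.2 fun i _ => IsUnit.prod_iff.2 fun j hj => ?_
    rw [← neg_sub]
    exact (hdiff i j (Finset.mem_Ioi.1 hj)).neg
  have hker : Matrix.vecMul (fun j => z j * (z j ^ n - 1)) (Matrix.vandermonde z) = 0 := by
    ext i
    have h1 := image_S φ hS (i := i + 1) (by omega) (by omega)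
    have h2 := image_S φ hS (i := i + 1 + n) (by omega) (by omega)
    rw [Nat.cast_add _ n, ZMod.natCast_self, add_zero, h1] at h2
    simp only [Matrix.vecMul, dotProduct, Matrix.vandermonde_apply, Pi.zero_apply]
    rw [← sub_eq_zero.2 h2.symm, ← Finset.sum_sub_distrib]
    refine Finset.sum_congr rfl fun j _ => ?_
    simp only [hz]
    ring
  have hzero := Matrix.vecMul_injective_of_isUnit ((Matrix.isUnit_iff_isUnit_det _).2 hdet)
    (hker.trans (Matrix.zero_vecMul _).symm)
  exact sub_eq_zero.1 ((hunit j).mul_right_eq_zero.1 (congrFun hzero j))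

end

/-- Membership in the saturation can be tested in the localization of the quotient ring. -/
lemma exists_pow_mul_mem {R : Type} [CommRing R] [Algebra F2 R] (I : Ideal R) (d f : R)
    (h : ∀ (B : Type) [CommRing B] [Algebra F2 B] (φ : R →ₐ[F2] B),
      (∀ g ∈ I, φ g = 0) → IsUnit (φ d) → φ f = 0) :
    ∃ k : ℕ, d ^ k * f ∈ I := by
  let δ : R ⧸ I := Ideal.Quotient.mk I d
  have h0 := h (Localization.Away δ)
    ((IsScalarTower.toAlgHom F2 (R ⧸ I) (Localization.Away δ)).comp (Ideal.Quotient.mkₐ F2 I))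
    (fun g hg => by simp [Ideal.Quotient.eq_zero_iff_mem.2 hg])
    (IsLocalization.Away.algebraMap_isUnit δ)
  obtain ⟨⟨_, k, rfl⟩, hk⟩ := (IsLocalization.map_eq_zero_iff (Submonoid.powers δ)
    (Localization.Away δ) (Ideal.Quotient.mk I f)).1 h0
  refine ⟨k, Ideal.Quotient.eq_zero_iff_mem.1 ?_⟩
  rw [map_mul, map_pow]
  exact hk

/-- the saturated ideal `(I_σ + I_S) : Δ^∞` (membership: some power of `Δ`
times the element lies in `I_σ + I_S`) contains `Z_i^(n+1) + Z_i` for `1 ≤ i ≤ w`,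
`σ_i^(2^m) + σ_i` for `1 ≤ i ≤ w`, and `S_i^(2^m) + S_i` for `0 ≤ i ≤ n−1`. -/
theorem saturation_contains_field_equations (n m w : ℕ) [NeZero n] (hodd : Odd n) (hm : 0 < m)
    (hdvd : n ∣ 2 ^ m - 1) (hw1 : 1 ≤ w) (hwn : w ≤ n)
    (α : K) (hα : IsPrimitiveRoot α n) :
    (∀ i : Fin w, ∃ k : ℕ,
        Delta n w ^ k *
          (X (Sum.inr (Sum.inr i)) ^ (n + 1) + X (Sum.inr (Sum.inr i)))
          ∈ Isig n w + IS n w) ∧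
    (∀ i : Fin w, ∃ k : ℕ,
        Delta n w ^ k * (X (Sum.inl i) ^ (2 ^ m) + X (Sum.inl i))
          ∈ Isig n w + IS n w) ∧
    (∀ i : ZMod n, ∃ k : ℕ,
        Delta n w ^ k *
          (X (Sum.inr (Sum.inl i)) ^ (2 ^ m) + X (Sum.inr (Sum.inl i)))
          ∈ Isig n w + IS n w) := by
  have two : ∀ (B : Type) [CommRing B] [Algebra F2 B] (x : B), x + x = 0 := fun B _ _ x => by
    rw [← two_smul F2 x, show (2 : F2) = 0 from rfl, zero_smul]
  have hfix : ∀ (B : Type) [CommRing B] [Algebra F2 B]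
      (φ : MvPolynomial (Vars' n w) F2 →ₐ[F2] B), (∀ g ∈ Isig n w + IS n w, φ g = 0) →
      IsUnit (φ (Delta n w)) → ∀ p : MvPolynomial (Fin w) F2,
      aeval (fun j => φ (X (Sum.inr (Sum.inr j)))) p ^ 2 ^ m =
        aeval (fun j => φ (X (Sum.inr (Sum.inr j)))) p := by
    intro B _ _ φ hI hΔ
    refine aeval_pow_two_pow m _ fun j => ?_
    have hn := image_Z_pow φ (fun f hf => hI f (Ideal.mem_sup_right hf)) hΔ j
    obtain ⟨c, hc⟩ := hdvd
    have h2 : 2 ^ m = n * c + 1 := by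
      have := Nat.one_le_two_pow (n := m)
      omega
    simp only [h2, pow_succ, pow_mul, hn, one_pow, one_mul]
  refine ⟨fun i => ?_, fun i => ?_, fun i => ?_⟩ <;>
    refine exists_pow_mul_mem _ _ _ fun B _ _ φ hI hΔ => ?_
  · have hn := image_Z_pow φ (fun f hf => hI f (Ideal.mem_sup_right hf)) hΔ i
    rw [map_add, map_pow, pow_succ, hn, one_mul, two]
  · rw [map_add, map_pow, image_sigma φ (fun f hf => hI f (Ideal.mem_sup_left hf)), hfix B φ hI hΔ,
      two]
  · -- A representative of `i` in `{1, …, n}`, since the generators of `I_S` start at index `1`.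
    obtain ⟨r, hr1, hr2, rfl⟩ : ∃ r : ℕ, 1 ≤ r ∧ r ≤ n + w ∧ (r : ZMod n) = i := by
      have hlt := ZMod.val_lt i
      by_cases h0 : i.val = 0
      · exact ⟨n, NeZero.one_le, by omega, by simp [(ZMod.val_eq_zero i).1 h0]⟩
      · exact ⟨i.val, by omega, by omega, ZMod.natCast_zmod_val i⟩
    have hS := image_S φ (fun f hf => hI f (Ideal.mem_sup_right hf)) hr1 hr2
    have hp := hfix B φ hI hΔ (∑ j : Fin w, X j ^ r)
    simp only [map_sum, map_pow, aeval_X] at hp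
    rw [map_add, map_pow, hS, hp, two]
end

section
/- The saturated ideal (I_σ + I_S) : Δ^∞ is a radical ideal of R', and consequently I^∞_{N,w} = ((I_σ + I_S) : Δ^∞) ∩ F_2[σ_1,…,σ_w, S_0,…,S_{n−1}] is a radical ideal of R = F_2[σ_1,…,σ_w, S_0,…,S_{n−1}]. -/
/-!
Let `B` be the localization of `R' / (I_σ + I_S)` at `Δ`; the kernel of `R' → B` is the saturation
of `I_σ + I_S` by `Δ`. Write `z_j` for the image of `Z_j` in `B`. Since `S_i = S_{i+n}`, the power
sums satisfy `∑_j z_j ^ i * (z_j ^ n - 1) = 0` for `1 ≤ i ≤ w`. The matrix of this linear system is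
a Vandermonde matrix scaled by the `z_j`, which is invertible because `Δ` is, so `z_j ^ n = 1`
(`root_of_unity_of_power_sums`). As `n ∣ 2 ^ m - 1`, this gives `z_j ^ (2 ^ m) = z_j`; the images of
`σ_i` and `S_i` are polynomials in the `z_j`, so the `m`-th iterate of Frobenius fixes the whole
image of `R'` in `B` (`map_pow_two_pow`). An element with `x ^ (2 ^ m) = x` can only be nilpotent
if it is zero, so the kernel is radical.
-/

open MvPolynomial

/-- A weighted sum system `∑_j z_j ^ i * c_j = 0` for `1 ≤ i ≤ w` has only the zero solution when
the `z_j` and their pairwise differences are units; here with `c_j = z_j ^ n - 1`. -/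
lemma root_of_unity_of_power_sums {B : Type*} [CommRing B] {n w : ℕ} (z : Fin w → B)
    (hz : ∀ j, IsUnit (z j)) (hd : ∀ i j, i < j → IsUnit (z i - z j))
    (hs : ∀ i : ℕ, 1 ≤ i → i ≤ w → ∑ j, z j ^ i = ∑ j, z j ^ (i + n)) (j : Fin w) :
    z j ^ n = 1 := by
  have hdet : IsUnit (Matrix.vandermonde z).det := by
    rw [Matrix.det_vandermonde]
    refine IsUnit.prod_univ_iff.2 fun i => IsUnit.prod_iff.2 fun k hk => ?_
    rw [← neg_sub]
    exact (hd i k (Finset.mem_Ioi.1 hk)).neg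
  have hinj := Matrix.vecMul_injective_of_isUnit ((Matrix.isUnit_iff_isUnit_det _).2 hdet)
  have h0 : (fun j => z j * (z j ^ n - 1)) = 0 := by
    apply hinj
    funext i
    have h := hs (i + 1) (by omega) (by omega)
    simp only [Matrix.zero_vecMul, Pi.zero_apply]
    rw [← sub_eq_zero.2 h.symm, ← Finset.sum_sub_distrib]
    simp only [Matrix.vecMul, dotProduct, Matrix.vandermonde_apply]
    exact Finset.sum_congr rfl fun j _ => by ring
  have := congrFun h0 j
  simp only [Pi.zero_apply] at this
  exact sub_eq_zero.1 ((hz j).mul_right_eq_zero.1 this)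

/-- If a ring map kills `I_σ + I_S` and inverts `Δ`, then its image consists of elements fixed by
the `m`-th iterate of Frobenius. -/
lemma map_pow_two_pow {B : Type*} [CommRing B] {n m w : ℕ} [NeZero n] (hdvd : n ∣ 2 ^ m - 1)
    (φ : MvPolynomial (Vars' n w) F2 →+* B) (hφ : ∀ f ∈ Isig n w + IS n w, φ f = 0)
    (hΔ : IsUnit (φ (Delta n w))) (g : MvPolynomial (Vars' n w) F2) :
    φ g ^ 2 ^ m = φ g := by
  set Z : Fin w → MvPolynomial (Vars' n w) F2 := fun j => X (Sum.inr (Sum.inr j)) with hZ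
  have hS : ∀ i : ℕ, 1 ≤ i → i ≤ n + w →
      φ (X (Sum.inr (Sum.inl (i : ZMod n)))) = φ (∑ j, Z j ^ i) := by
    intro i h1 h2
    rw [← sub_eq_zero, ← map_sub]
    exact hφ _ (Ideal.mem_sup_right (Ideal.subset_span ⟨i, ⟨h1, h2⟩, rfl⟩))
  have hσ : ∀ i : Fin w, φ (X (Sum.inl i)) =
      φ (rename (fun j : Fin w => Sum.inr (Sum.inr j)) (esymm (Fin w) F2 ((i : ℕ) + 1))) := by
    intro i
    rw [← sub_eq_zero, ← map_sub]
    exact hφ _ (Ideal.mem_sup_left (Ideal.subset_span ⟨i, rfl⟩))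
  have hunit : ∀ f, f ∣ Delta n w → IsUnit (φ f) := fun f hf =>
    isUnit_of_dvd_unit (map_dvd φ hf) hΔ
  have hroot : ∀ j, φ (Z j) ^ n = 1 := by
    refine root_of_unity_of_power_sums (fun j => φ (Z j)) (fun j => hunit _ ?_)
      (fun i j hij => ?_) (fun i h1 h2 => ?_)
    · exact (Finset.dvd_prod_of_mem Z (Finset.mem_univ j)).mul_right _
    · rw [← map_sub]
      refine hunit _ (Dvd.dvd.mul_left ?_ _)
      exact Finset.dvd_prod_of_mem (fun p : Fin w × Fin w => Z p.1 - Z p.2)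
        (a := (i, j)) (by simpa using hij)
    · have ha := hS i h1 (by omega)
      have hb := hS (i + n) (by omega) (by omega)
      simp only [Nat.cast_add, CharP.cast_eq_zero, add_zero] at hb
      simpa only [map_sum, map_pow] using ha.symm.trans hb
  have hZfix : ∀ j, φ (Z j ^ 2 ^ m) = φ (Z j) := by
    intro j
    obtain ⟨c, hc⟩ := hdvd
    have h2 : 2 ^ m = n * c + 1 := by
      have := Nat.one_le_two_pow (n := m)
      omega
    rw [h2, map_pow, pow_succ, pow_mul, hroot, one_pow, one_mul]
  let F : MvPolynomial (Vars' n w) F2 →+* MvPolynomial (Vars' n w) F2 := iterateFrobenius _ 2 m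
  have hF : ∀ f, F f = f ^ 2 ^ m := fun f => iterateFrobenius_def _ _ _
  have hC : ∀ a : F2, F (C a) = C a := fun a => by
    rw [hF, ← C_pow, ZMod.pow_card_pow]
  -- Polynomials in the `Z_j` alone.
  have hren : ∀ p : MvPolynomial (Fin w) F2,
      φ (F (rename (fun j : Fin w => Sum.inr (Sum.inr j)) p)) =
        φ (rename (fun j : Fin w => Sum.inr (Sum.inr j)) p) := by
    intro p
    have : ((φ.comp F).comp
          (rename (R := F2) (fun j : Fin w => (Sum.inr (Sum.inr j) : Vars' n w))).toRingHom) =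
        φ.comp (rename (R := F2)
          (fun j : Fin w => (Sum.inr (Sum.inr j) : Vars' n w))).toRingHom := by
      refine MvPolynomial.ringHom_ext (fun a => ?_) (fun j => ?_)
      · simp [hC]
      · simpa [hF] using hZfix j
    exact RingHom.congr_fun this p
  have key : φ.comp F = φ := by
    refine MvPolynomial.ringHom_ext (fun a => ?_) ?_
    · simp [hC]
    · rintro (i | a | j)
      · have := hren (esymm (Fin w) F2 ((i : ℕ) + 1))
        rw [hF, map_pow, ← hσ, ← map_pow] at this
        simpa [hF] using this
      · -- The index `0` of `S` is represented by the exponent `n`, since exponents start at `1`.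
        obtain ⟨i, h1, h2, rfl⟩ : ∃ i : ℕ, 1 ≤ i ∧ i ≤ n + w ∧ (i : ZMod n) = a := by
          have hlt := ZMod.val_lt a
          by_cases h : a.val = 0
          · exact ⟨n, NeZero.one_le, by omega, by simp [(ZMod.val_eq_zero a).1 h]⟩
          · exact ⟨a.val, by omega, by omega, ZMod.natCast_zmod_val a⟩
        have := hren (∑ j, X j ^ i)
        have he : rename (fun j : Fin w => (Sum.inr (Sum.inr j) : Vars' n w))
            (∑ j, X j ^ i : MvPolynomial (Fin w) F2) = ∑ j, Z j ^ i := by simp [hZ]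
        rw [he, hF, map_pow, ← hS i h1 h2, ← map_pow] at this
        simpa [hF] using this
      · simpa [hF] using hZfix j
  have := RingHom.congr_fun key g
  simpa [hF] using this

/-- Membership in the saturation is vanishing in the localization of the quotient at `Δ`. -/
lemma map_localization_eq_zero_iff {A : Type*} [CommRing A] (I : Ideal A) (d g : A) :
    algebraMap (A ⧸ I) (Localization.Away (Ideal.Quotient.mk I d)) (Ideal.Quotient.mk I g) = 0 ↔
      ∃ k : ℕ, d ^ k * g ∈ I := by
  rw [IsLocalization.map_eq_zero_iff (Submonoid.powers (Ideal.Quotient.mk I d))]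
  constructor
  · rintro ⟨⟨_, k, rfl⟩, h⟩
    exact ⟨k, Ideal.Quotient.eq_zero_iff_mem.1 (by simpa using h)⟩
  · rintro ⟨k, h⟩
    exact ⟨⟨_, k, rfl⟩, by simpa using Ideal.Quotient.eq_zero_iff_mem.2 h⟩

/-- the saturated ideal `(I_σ + I_S) : Δ^∞` is radical
(membership in the saturation: some power of `Δ` times the element lies in `I_σ + I_S`),
and consequently the elimination ideal `I^∞_{N,w} = ((I_σ + I_S) : Δ^∞) ∩ F₂[σ, S]` is a
radical ideal of `R = F₂[σ, S]`. -/
theorem saturation_isRadical (n m w : ℕ) [NeZero n] (hodd : Odd n) (hm : 0 < m)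
    (hdvd : n ∣ 2 ^ m - 1) (hw1 : 1 ≤ w) (hwn : w ≤ n)
    (α : K) (hα : IsPrimitiveRoot α n) :
    (∀ (g : MvPolynomial (Vars' n w) F2) (r : ℕ), 0 < r →
      (∃ k : ℕ, Delta n w ^ k * g ^ r ∈ Isig n w + IS n w) →
      ∃ k : ℕ, Delta n w ^ k * g ∈ Isig n w + IS n w) ∧
    (∀ (p : MvPolynomial (Fin w ⊕ ZMod n) F2) (r : ℕ), 0 < r →
      (∃ k : ℕ, Delta n w ^ k * MvPolynomial.rename (emb n w) (p ^ r) ∈ Isig n w + IS n w) →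
      ∃ k : ℕ, Delta n w ^ k * MvPolynomial.rename (emb n w) p ∈ Isig n w + IS n w) := by 
  have main : ∀ (g : MvPolynomial (Vars' n w) F2) (r : ℕ), 0 < r →
      (∃ k : ℕ, Delta n w ^ k * g ^ r ∈ Isig n w + IS n w) →
      ∃ k : ℕ, Delta n w ^ k * g ∈ Isig n w + IS n w := by
    intro g r _ h
    rw [← map_localization_eq_zero_iff] at h ⊢
    set I := Isig n w + IS n w with hI
    let φ : MvPolynomial (Vars' n w) F2 →+*
        Localization.Away (Ideal.Quotient.mk I (Delta n w)) :=
      (algebraMap _ _).comp (Ideal.Quotient.mk I)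
    change φ (g ^ r) = 0 at h
    change φ g = 0
    have hfix : φ g ^ 2 ^ m = φ g := by
      refine map_pow_two_pow hdvd φ (fun f hf => ?_) ?_ g
      · rw [RingHom.comp_apply, Ideal.Quotient.eq_zero_iff_mem.2 hf, map_zero]
      · exact IsLocalization.Away.algebraMap_isUnit (Ideal.Quotient.mk I (Delta n w))
    have hiter : ∀ t : ℕ, φ g ^ (2 ^ m) ^ t = φ g := by
      intro t
      induction t with
      | zero => simp
      | succ t ih => rw [pow_succ, pow_mul, ih, hfix]
    have hr : r ≤ (2 ^ m) ^ r := (Nat.lt_pow_self (Nat.one_lt_two_pow hm.ne')).le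
    rw [map_pow] at h
    rw [← hiter r]
    exact pow_eq_zero_of_le hr h
  refine ⟨main, fun p r hr h => main _ r hr ?_⟩
  simpa only [map_pow] using h
end

section
/- The Newton ideal is contained in the saturated elimination ideal: I_{N,w} ⊆ I^∞_{N,w}. -/
/-!
The Newton ideal already lies in `I_σ + I_S`, so no power of `Δ` is needed: the exponent `0` works.
In the quotient `R' / (I_σ + I_S)` the variable `σ_j` becomes `e_j(Z)` and, for `1 ≤ i ≤ n + w`,
the variable `S_i` becomes the power sum `p_i(Z)`. Every `S`-index `i - j` occurring in the `i`-th
generator, before reduction modulo `n`, lies between `1` and `n + w`, so that generator maps to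
`p_i + ∑_{1 ≤ j < i} e_j p_{i-j} + i e_i`. This vanishes by Newton's identities in characteristic 2
(`newton_char_two`); for `i > w` the terms with `j > w`, as well as `i e_i`, drop out
since `e_j = 0` for `j > w`.
-/

open MvPolynomial

/-- Newton's identities over `F₂`, where all signs disappear. -/
lemma newton_char_two (w i : ℕ) (hi : 1 ≤ i) :
    psum (Fin w) F2 i + ∑ j ∈ Finset.Ico 1 i, esymm (Fin w) F2 j * psum (Fin w) F2 (i - j)
      + (i : MvPolynomial (Fin w) F2) * esymm (Fin w) F2 i = 0 := by
  have h := mul_esymm_eq_sum (Fin w) F2 i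
  have e1 : (-1 : MvPolynomial (Fin w) F2) = 1 := CharTwo.neg_eq 1
  have h2 : ∑ a ∈ Finset.HasAntidiagonal.antidiagonal i with a.1 < i,
      esymm (Fin w) F2 a.1 * psum (Fin w) F2 a.2
      = ∑ j ∈ Finset.range i, esymm (Fin w) F2 j * psum (Fin w) F2 (i - j) := by
    rw [Finset.sum_filter, Finset.Nat.sum_antidiagonal_eq_sum_range_succ_mk,
      Finset.sum_range_succ]
    simp only [lt_irrefl, if_false, add_zero]
    exact Finset.sum_congr rfl fun j hj => if_pos (Finset.mem_range.1 hj)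
  simp only [e1, one_pow, one_mul] at h
  rw [h, h2, Finset.range_eq_Ico, Finset.sum_eq_sum_Ico_succ_bot (show 0 < i by omega)]
  simp only [esymm_zero, one_mul, Nat.sub_zero, zero_add]
  exact CharTwo.add_self_eq_zero _

lemma esymm_eq_zero_of_lt (w j : ℕ) (hj : w < j) : esymm (Fin w) F2 j = 0 := by
  rw [esymm, Finset.powersetCard_eq_empty.2 (by simpa using hj), Finset.sum_empty]

/-- The composite `F₂[Z₁,…,Z_w] → R' → R' / (I_σ + I_S)`. -/
noncomputable def zMap (n w : ℕ) :
    MvPolynomial (Fin w) F2 →+* MvPolynomial (Vars' n w) F2 ⧸ (Isig n w + IS n w) :=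
  (Ideal.Quotient.mk _).comp
    (rename (fun j : Fin w => (Sum.inr (Sum.inr j) : Vars' n w))).toRingHom

lemma mk_Sv (n w i : ℕ) (h1 : 1 ≤ i) (h2 : i ≤ n + w) :
    Ideal.Quotient.mk (Isig n w + IS n w) (rename (emb n w) (Sv n w i))
      = zMap n w (psum (Fin w) F2 i) := by
  refine Ideal.Quotient.eq.2 (Ideal.mem_sup_right (Ideal.subset_span ⟨i, ⟨h1, h2⟩, ?_⟩))
  simp [Sv, emb, psum]

lemma mk_sigv (n w j : ℕ) (h1 : 1 ≤ j) :
    Ideal.Quotient.mk (Isig n w + IS n w) (rename (emb n w) (sigv n w j))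
      = zMap n w (esymm (Fin w) F2 j) := by
  by_cases hj : j ≤ w
  · refine Ideal.Quotient.eq.2 (Ideal.mem_sup_left
      (Ideal.subset_span ⟨⟨j - 1, by omega⟩, ?_⟩))
    simp [sigv, emb, h1, hj]
  · simp [sigv, hj, esymm_eq_zero_of_lt w j (by omega)]

/-- Any ring homomorphism `f` sending `σ_j` to `g (e_j)` and `S_i` to `g (p_i)` in the relevant
range of indices kills the `i`-th Newton polynomial. Kept over an arbitrary target ring `A`, so that
elaboration never has to unfold the quotient ring. -/
lemma map_newtonPoly_eq_zero {A : Type*} [CommRing A] (n w i : ℕ)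
    (f : MvPolynomial (Fin w ⊕ ZMod n) F2 →+* A) (g : MvPolynomial (Fin w) F2 →+* A)
    (hS : ∀ i, 1 ≤ i → i ≤ n + w → f (Sv n w i) = g (psum (Fin w) F2 i))
    (hsig : ∀ j, 1 ≤ j → f (sigv n w j) = g (esymm (Fin w) F2 j))
    (h1 : 1 ≤ i) (h2 : i ≤ n + w) : f (newtonPoly n w i) = 0 := by
  have hN := congrArg g (newton_char_two w i h1)
  simp only [map_add, map_sum, map_mul, map_natCast, map_zero] at hN
  have hterm : ∀ j, 1 ≤ j → j < i → f (sigv n w j) * f (Sv n w (i - j))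
      = g (esymm (Fin w) F2 j) * g (psum (Fin w) F2 (i - j)) := by
    intro j hj hji
    rw [hsig j hj, hS (i - j) (by omega) (by omega)]
  unfold newtonPoly
  split_ifs with hiw
  · simp only [map_add, map_sum, map_mul, map_natCast]
    rw [hS i h1 h2, hsig i h1, ← hN]
    congr 2
    exact Finset.sum_congr rfl fun j hj =>
      hterm j (Finset.mem_Ico.1 hj).1 (Finset.mem_Ico.1 hj).2
  · simp only [map_add, map_sum, map_mul]
    rw [esymm_eq_zero_of_lt w i (by omega), map_zero, mul_zero, add_zero] at hN
    rw [hS i h1 h2, ← hN]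
    congr 1
    rw [Finset.sum_congr rfl fun j hj =>
      hterm j (Finset.mem_Icc.1 hj).1 (by have := (Finset.mem_Icc.1 hj).2; omega)]
    refine Finset.sum_subset (fun j hj => ?_) fun j hj hj' => ?_
    · simp only [Finset.mem_Icc, Finset.mem_Ico] at hj ⊢; omega
    · simp only [Finset.mem_Icc, Finset.mem_Ico] at hj hj'
      rw [esymm_eq_zero_of_lt w j (by omega), map_zero, zero_mul]

/-- Each generator of the Newton ideal already lies in `I_σ + I_S`. -/
lemma rename_newtonPoly_mem (n w i : ℕ) (h1 : 1 ≤ i) (h2 : i ≤ n + w) :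
    rename (emb n w) (newtonPoly n w i) ∈ Isig n w + IS n w :=
  Ideal.Quotient.eq_zero_iff_mem.1 <|
    map_newtonPoly_eq_zero n w i
      ((Ideal.Quotient.mk (Isig n w + IS n w)).comp (rename (emb n w)).toRingHom) (zMap n w)
      (mk_Sv n w) (mk_sigv n w) h1 h2

/-- the Newton ideal is contained in the saturated elimination ideal:
every `p ∈ I_{N,w}`, viewed in `R'`, belongs to `(I_σ + I_S) : Δ^∞`, i.e.
`I_{N,w} ⊆ I^∞_{N,w}`. -/
theorem newtonIdeal_subset_saturated (n m w : ℕ) [NeZero n] (hodd : Odd n) (hm : 0 < m)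
    (hdvd : n ∣ 2 ^ m - 1) (hw1 : 1 ≤ w) (hwn : w ≤ n)
    (α : K) (hα : IsPrimitiveRoot α n) :
    ∀ p ∈ newtonIdeal n w,
      ∃ k : ℕ, Delta n w ^ k * MvPolynomial.rename (emb n w) p ∈ Isig n w + IS n w := by
  intro p hp
  refine ⟨0, ?_⟩
  rw [pow_zero, one_mul]
  have hle : newtonIdeal n w ≤ (Isig n w + IS n w).comap (rename (emb n w)) := by
    refine Ideal.span_le.2 ?_
    rintro _ ⟨i, ⟨h1, h2⟩, rfl⟩
    exact rename_newtonPoly_mem n w i h1 h2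
  exact hle hp
end

section
/- The zero set V(I^∞_{N,w}) ⊆ K^{w+n} is exactly the set of points (σ_1,…,σ_w, S_0,…,S_{n−1}) for which there exists a binary word e ∈ F_2^n of weight exactly w, with locators Z_1,…,Z_w, such that σ_i = e_i(Z_1,…,Z_w) for 1 ≤ i ≤ w (the i-th elementary symmetric function of the locators) and S_i = Σ_{j=1}^{w} Z_j^i = S_i(e) for 0 ≤ i ≤ n−1 (the power sums of the locators, i.e. the Fourier transform of e). -/
/-!
Write `I = I_σ + I_S`, and let `L` be the localization of `R'/I` at `Δ`, so that
`I : Δ^∞` is the kernel of `R' → L` and `I^∞_{N,w}` is the kernel of the composite `R → L`.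

Comparing the generators of `I_S` with indices `i` and `i + n`, `1 ≤ i ≤ w`, gives
`∑_j Z_j^i (Z_j^n - 1) = 0` in `R'/I`. This is a linear system in the `Z_j^n - 1` whose determinant
is, up to sign, the Vandermonde-type product `Δ`; since `Δ` is a unit in `L`, we get `Z_j^n = 1`
there (`pow_eq_one_of_point`). As `σ_i` and `S_i` are polynomials in the `Z_j` modulo `I`, the image
of `R'` in `L` is integral over `F₂`, hence so is `L`, because over a field the inverse of an
integral unit is integral (`isIntegral_away`).

Consequently `R → L` is integral, and a point `x` with values in the algebraically closed field `K`
which kills `I^∞_{N,w}` extends to a homomorphism `L → K` by lying over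
(`exists_extension_of_isIntegral`). The images of the `Z_j` are distinct `n`-th roots of unity
because `Δ` is a unit in `L`, so they are the locators of a binary word of weight `w`, namely the
indicator of their discrete logarithms to base `α` (`exists_word_of_point`).

Conversely, the locators of a word of weight `w` give a point of `V(I)` at which `Δ` does not
vanish, so every element of `I^∞_{N,w}` vanishes at its projection.
-/

open MvPolynomial

noncomputable section

/-- The Fourier transform of a word `e ∈ Kⁿ`: `S_i(e) = ∑_j e_j α^(i·j)`. -/
def ft {n : ℕ} [NeZero n] (α : K) (e : ZMod n → K) (i : ZMod n) : K :=
  ∑ j : ZMod n, e j * α ^ (i.val * j.val)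

/-- A word is binary if all its coordinates lie in the prime subfield `F₂ ⊆ K`,
i.e. each coordinate is `0` or `1`. -/
def isBinary {n : ℕ} (e : ZMod n → K) : Prop := ∀ j, e j = 0 ∨ e j = 1

/-- The (Hamming) weight of a word: the number of its nonzero coordinates. -/
def wt {n : ℕ} (e : ZMod n → K) : ℕ := Set.ncard {j | e j ≠ 0}

end

/-! ### Commutative algebra -/

lemma exists_extension_of_injective {R L M : Type*} [CommRing R] [IsDomain R] [CommRing L]
    [IsDomain L] [Field M] [IsAlgClosed M] (φ : R →+* L) (hφ : φ.IsIntegral)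
    (hinj : Function.Injective φ) (f : R →+* M) (hf : Function.Injective f) :
    ∃ Ψ : L →+* M, Ψ.comp φ = f := by
  let _ : Algebra R L := φ.toAlgebra
  let _ : Algebra R M := f.toAlgebra
  have : Algebra.IsIntegral R L := ⟨hφ⟩
  have : Module.IsTorsionFree R L := Module.isTorsionFree_iff_algebraMap_injective.2 hinj
  have : Module.IsTorsionFree R M := Module.isTorsionFree_iff_algebraMap_injective.2 hf
  let Θ : L →ₐ[R] M := IsAlgClosed.lift
  exact ⟨Θ.toRingHom, RingHom.ext fun r => Θ.commutes r⟩

/-- Lying over combined with algebraic closedness: a point of `R` with values in an algebraically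
closed field extends along an integral homomorphism as soon as it kills the kernel. -/
lemma exists_extension_of_isIntegral {R L M : Type*} [CommRing R] [CommRing L] [Field M]
    [IsAlgClosed M] (φ : R →+* L) (hφ : φ.IsIntegral) (f : R →+* M)
    (hker : RingHom.ker φ ≤ RingHom.ker f) : ∃ Ψ : L →+* M, Ψ.comp φ = f := by
  have hP : (RingHom.ker f).IsPrime := RingHom.ker_isPrime f
  obtain ⟨Q, hQ, hQP⟩ : ∃ Q : Ideal L, Q.IsPrime ∧ Q.comap φ = RingHom.ker f := by
    let _ : Algebra R L := φ.toAlgebra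
    have : Algebra.IsIntegral R L := ⟨hφ⟩
    obtain ⟨Q, -, h⟩ :=
      Ideal.exists_ideal_over_prime_of_isIntegral (S := L) (RingHom.ker f) ⊥ hker
    exact ⟨Q, h⟩
  have hint : ((Ideal.Quotient.mk Q).comp φ).IsIntegral :=
    RingHom.IsIntegral.trans _ _ hφ (RingHom.isIntegral_of_surjective _ Ideal.Quotient.mk_surjective)
  obtain ⟨Θ, hΘ⟩ := exists_extension_of_injective
    (Ideal.quotientMap Q φ hQP.ge) (RingHom.IsIntegral.tower_top (Ideal.Quotient.mk _) _ hint)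
    (Ideal.quotientMap_injective' hQP.le) (RingHom.kerLift f) (RingHom.kerLift_injective f)
  refine ⟨Θ.comp (Ideal.Quotient.mk Q), RingHom.ext fun r => ?_⟩
  exact RingHom.congr_fun hΘ (Ideal.Quotient.mk _ r)

/-- A Vandermonde system `∑_j z_j^i y_j = 0`, `1 ≤ i ≤ w`, has only the trivial solution when the
`z_j` and their differences are units. -/
lemma eq_zero_of_powerSum {L : Type*} [CommRing L] {w : ℕ} (z y : Fin w → L)
    (hz : ∀ j, IsUnit (z j)) (hd : ∀ i j, i < j → IsUnit (z i - z j))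
    (h : ∀ i : ℕ, 1 ≤ i → i ≤ w → ∑ j, z j ^ i * y j = 0) : y = 0 := by
  have hdet : IsUnit (Matrix.vandermonde z).transpose := by
    rw [Matrix.isUnit_iff_isUnit_det, Matrix.det_transpose, Matrix.det_vandermonde,
      IsUnit.prod_iff]
    intro i _
    rw [IsUnit.prod_iff]
    intro j hj
    have := (hd i j (Finset.mem_Ioi.1 hj)).neg
    rwa [neg_sub] at this
  -- The exponents start at `1`, so the Vandermonde matrix acts on the vector `(z_j y_j)_j`.
  have key : (fun j => z j * y j) = 0 := by
    apply Matrix.mulVec_injective_of_isUnit hdet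
    rw [Matrix.mulVec_zero]
    funext i
    rw [Pi.zero_apply, ← h (i + 1) (by omega) (by omega)]
    simp only [Matrix.mulVec, dotProduct, Matrix.transpose_apply, Matrix.vandermonde_apply]
    exact Finset.sum_congr rfl fun j _ => by ring
  funext j
  exact (hz j).mul_right_eq_zero.1 (congrFun key j)

/-- If the image of `A` in its localization `L` at one element is integral over the field `F₂`,
then so is `L`: in the integral closure the inverted element is a non-zero-divisor, hence a unit. -/
lemma isIntegral_away {A L : Type*} [CommRing A] [CommRing L] [Algebra F2 L]
    [Algebra A L] (d : A) [IsLocalization.Away d L]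
    (hA : ∀ a : A, IsIntegral F2 (algebraMap A L a)) : Algebra.IsIntegral F2 L := by
  have hd : IsUnit (algebraMap A L d) := IsLocalization.Away.algebraMap_isUnit d
  let B := integralClosure F2 L
  let b : B := ⟨algebraMap A L d, hA d⟩
  have hb : IsUnit b := by
    refine IsArtinianRing.isUnit_of_isIntegral_of_nonZeroDivisor (R := F2)
      (Algebra.IsIntegral.isIntegral b) ?_
    refine mem_nonZeroDivisors_iff_right.2 fun c hc => Subtype.ext ?_
    exact hd.mul_left_eq_zero.1 (congrArg Subtype.val hc)
  obtain ⟨c, hc⟩ := hb.exists_right_inv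
  have hc' : algebraMap A L d * c.1 = 1 := congrArg Subtype.val hc
  refine ⟨fun l => ?_⟩
  obtain ⟨k, a, ha⟩ := IsLocalization.Away.surj d l
  have : l = algebraMap A L a * c.1 ^ k := by
    rw [← ha, mul_assoc, ← mul_pow, hc', one_pow, mul_one]
  rw [this]
  exact (hA a).mul (c.2.pow k)

lemma isIntegral_aeval {V L : Type*} [CommRing L] [Algebra F2 L] (y : V → L)
    (hy : ∀ v, IsIntegral F2 (y v)) (p : MvPolynomial V F2) : IsIntegral F2 (aeval y p) := by
  induction p using MvPolynomial.induction_on with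
  | C a => rw [aeval_C]; exact isIntegral_algebraMap
  | add p q hp hq => rw [map_add]; exact hp.add hq
  | mul_X p v hp => rw [map_mul, aeval_X]; exact hp.mul (hy v)

/-! ### Points of the incidence variety -/

/-- An `L`-valued point `y` kills `I_σ + I_S` iff its `σ`- and `S`-coordinates are the elementary
symmetric functions and the power sums of its `Z`-coordinates. -/
lemma aeval_eq_zero_iff {n w : ℕ} {L : Type*} [CommRing L] [Algebra F2 L] (y : Vars' n w → L) :
    (∀ p ∈ Isig n w + IS n w, aeval y p = 0) ↔
      (∀ i : Fin w, y (Sum.inl i) =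
        aeval (fun j => y (Sum.inr (Sum.inr j))) (esymm (Fin w) F2 ((i : ℕ) + 1))) ∧
      (∀ i : ℕ, 1 ≤ i → i ≤ n + w →
        y (Sum.inr (Sum.inl (i : ZMod n))) = ∑ j, y (Sum.inr (Sum.inr j)) ^ i) := by
  have hker : (∀ p ∈ Isig n w + IS n w, aeval y p = 0) ↔
      Isig n w + IS n w ≤ RingHom.ker (aeval (R := F2) y) := Iff.rfl
  rw [hker, Submodule.add_eq_sup, sup_le_iff, Isig, IS, Ideal.span_le, Ideal.span_le,
    Set.range_subset_iff, Set.image_subset_iff]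
  refine and_congr (forall_congr' fun i => ?_) ⟨fun h i h1 h2 => ?_, fun h i hi => ?_⟩
  · simp only [SetLike.mem_coe, RingHom.mem_ker, map_sub, aeval_X, aeval_rename, sub_eq_zero]
    rfl
  · have := h (Set.mem_Icc.2 ⟨h1, h2⟩)
    simpa [RingHom.mem_ker, sub_eq_zero] using this
  · have := h i hi.1 hi.2
    simpa [RingHom.mem_ker, sub_eq_zero] using this

lemma aeval_Delta {n w : ℕ} {L : Type*} [CommRing L] [Algebra F2 L] (y : Vars' n w → L) :
    aeval y (Delta n w) = (∏ j, y (Sum.inr (Sum.inr j))) *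
      ∏ p ∈ Finset.univ.filter (fun p : Fin w × Fin w => p.1 < p.2),
        (y (Sum.inr (Sum.inr p.1)) - y (Sum.inr (Sum.inr p.2))) := by
  simp [Delta, map_prod]

/-- `Δ` is invertible at a point exactly when the `Z`-coordinates and their differences are. -/
lemma isUnit_aeval_Delta {n w : ℕ} {L : Type*} [CommRing L] [Algebra F2 L] (y : Vars' n w → L) :
    IsUnit (aeval y (Delta n w)) ↔ (∀ j, IsUnit (y (Sum.inr (Sum.inr j)))) ∧
      ∀ i j, i < j → IsUnit (y (Sum.inr (Sum.inr i)) - y (Sum.inr (Sum.inr j))) := by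
  rw [aeval_Delta, IsUnit.mul_iff, IsUnit.prod_iff, IsUnit.prod_iff]
  simp [Prod.forall]

/-- The differences of the generators of `I_S` with indices `i` and `i + n` force `Z_j^n = 1`
wherever `Δ` is invertible. -/
lemma pow_eq_one_of_point {n w : ℕ} {L : Type*} [CommRing L] [Algebra F2 L] (y : Vars' n w → L)
    (h0 : ∀ p ∈ Isig n w + IS n w, aeval y p = 0) (hu : IsUnit (aeval y (Delta n w)))
    (j : Fin w) : y (Sum.inr (Sum.inr j)) ^ n = 1 := by
  obtain ⟨-, hS⟩ := (aeval_eq_zero_iff y).1 h0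
  obtain ⟨hz, hd⟩ := (isUnit_aeval_Delta y).1 hu
  have := eq_zero_of_powerSum _ (fun j => y (Sum.inr (Sum.inr j)) ^ n - 1) hz hd fun i h1 h2 => by
    have e1 := hS i h1 (by omega)
    have e2 := hS (i + n) (by omega) (by omega)
    rw [Nat.cast_add, ZMod.natCast_self, add_zero, e1] at e2
    simp only [mul_sub, mul_one, ← pow_add, Finset.sum_sub_distrib]
    rw [← e2, sub_self]
  exact sub_eq_zero.1 (congrFun this j)

lemma isIntegral_of_point {n w : ℕ} [NeZero n] {L : Type*} [CommRing L] [Algebra F2 L]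
    (y : Vars' n w → L) (h0 : ∀ p ∈ Isig n w + IS n w, aeval y p = 0)
    (hu : IsUnit (aeval y (Delta n w))) (p : MvPolynomial (Vars' n w) F2) :
    IsIntegral F2 (aeval y p) := by
  have hz : ∀ j, IsIntegral F2 (y (Sum.inr (Sum.inr j))) := fun j =>
    IsIntegral.of_pow (NeZero.pos n) (by
      rw [pow_eq_one_of_point y h0 hu j]; exact isIntegral_one)
  obtain ⟨hσ, hS⟩ := (aeval_eq_zero_iff y).1 h0
  refine isIntegral_aeval y ?_ p
  rintro (i | i | j)
  · rw [hσ i]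
    exact isIntegral_aeval _ hz _
  · -- The generators start at index `1`, so `S_0` is given by the power sum of index `n`.
    rcases eq_or_ne i 0 with rfl | hi
    · have := hS n (NeZero.pos n) (by omega)
      rw [ZMod.natCast_self] at this
      rw [this]
      exact IsIntegral.sum _ fun j _ => (hz j).pow _
    · have := hS i.val (Nat.pos_of_ne_zero ((ZMod.val_ne_zero i).2 hi))
        (by have := ZMod.val_lt i; omega)
      rw [ZMod.natCast_zmod_val] at this
      rw [this]
      exact IsIntegral.sum _ fun j _ => (hz j).pow _
  · exact hz j

/-! ### Words and their locators -/

/-- Every point of `V(I_σ + I_S)` over `K` off the hypersurface `Δ = 0` comes from a binary word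
of weight `w`. -/
lemma exists_word_of_point {n w : ℕ} [NeZero n] {α : K} (hα : IsPrimitiveRoot α n)
    (y : Vars' n w → K) (h0 : ∀ p ∈ Isig n w + IS n w, aeval y p = 0)
    (hu : IsUnit (aeval y (Delta n w))) :
    ∃ e : ZMod n → K, isBinary e ∧ wt e = w ∧
        ∃ Z : Fin w → K, Function.Injective Z ∧
          Set.range Z = (fun u : ZMod n => α ^ u.val) '' {j | e j ≠ 0} ∧
          (∀ i : Fin w,
            y (Sum.inl i) = aeval Z (esymm (Fin w) F2 ((i : ℕ) + 1))) ∧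
          (∀ i : ZMod n, y (Sum.inr (Sum.inl i)) = ∑ j : Fin w, Z j ^ i.val) ∧
          (∀ i : ZMod n, y (Sum.inr (Sum.inl i)) = ft α e i) := by
  classical
  have hpow := pow_eq_one_of_point y h0 hu
  obtain ⟨hσ, hS⟩ := (aeval_eq_zero_iff y).1 h0
  obtain ⟨-, hd⟩ := (isUnit_aeval_Delta y).1 hu
  set Z : Fin w → K := fun j => y (Sum.inr (Sum.inr j)) with hZ
  have hinj : Function.Injective Z := by
    intro i j hij
    by_contra hne
    rcases lt_or_gt_of_ne hne with h | h
    · exact (hd i j h).ne_zero (sub_eq_zero.2 hij)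
    · exact (hd j i h).ne_zero (sub_eq_zero.2 hij.symm)
  -- `u j` is the discrete logarithm of `Z j` to base `α`.
  have hlog : ∀ j, ∃ u : ZMod n, α ^ u.val = Z j := fun j => by
    obtain ⟨k, hk, hk'⟩ := hα.eq_pow_of_pow_eq_one (hpow j)
    exact ⟨(k : ZMod n), by rw [ZMod.val_cast_of_lt hk, hk']⟩
  choose u hu' using hlog
  have huinj : Function.Injective u := fun i j hij => hinj (by rw [← hu', ← hu', hij])
  have hsupp : {j | (if j ∈ Set.range u then (1 : K) else 0) ≠ 0} = Set.range u := by
    ext j; simp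
  have hSval : ∀ i : ZMod n, y (Sum.inr (Sum.inl i)) = ∑ j : Fin w, Z j ^ i.val := by
    intro i
    rcases eq_or_ne i 0 with rfl | hi
    · have := hS n (NeZero.pos n) (by omega)
      rw [ZMod.natCast_self] at this
      rw [this]
      exact Finset.sum_congr rfl fun j _ => by rw [ZMod.val_zero, pow_zero]; exact hpow j
    · have := hS i.val (Nat.pos_of_ne_zero ((ZMod.val_ne_zero i).2 hi))
        (by have := ZMod.val_lt i; omega)
      rwa [ZMod.natCast_zmod_val] at this
  refine ⟨fun j => if j ∈ Set.range u then 1 else 0, fun j => ?_, ?_, Z, hinj, ?_, hσ, hSval,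
    fun i => ?_⟩
  · by_cases h : j ∈ Set.range u <;> simp [h]
  · rw [wt, hsupp, ← Set.image_univ, Set.ncard_image_of_injective _ huinj, Set.ncard_univ,
      Nat.card_eq_fintype_card, Fintype.card_fin]
  · rw [hsupp, ← Set.range_comp]
    exact congrArg Set.range (funext fun j => (hu' j).symm)
  · rw [hSval i, ft]
    have : ∀ j : ZMod n, (if j ∈ Set.range u then (1 : K) else 0) * α ^ (i.val * j.val) =
        if j ∈ Finset.univ.image u then α ^ (i.val * j.val) else 0 := fun j => by
      by_cases h : j ∈ Set.range u <;> simp_all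
    simp only [this]
    rw [Finset.sum_ite_mem, Finset.univ_inter, Finset.sum_image fun a _ b _ h => huinj h]
    exact Finset.sum_congr rfl fun j _ => by rw [← hu' j, ← pow_mul, mul_comm]

/-- the zero set `V(I^∞_{N,w}) ⊆ K^(w+n)` consists exactly of the points
whose coordinates are the elementary symmetric functions and the power sums of the
locators `Z₁,…,Z_w` of a binary word `e` of weight exactly `w` (the power sums being the
Fourier transform of `e`). Membership of `p ∈ F₂[σ,S]` in `I^∞_{N,w}`: some power of `Δ`
times `p` (viewed in `R'`) lies in `I_σ + I_S`. -/
theorem variety_of_saturated_ideal (n m w : ℕ) [NeZero n] (hodd : Odd n) (hm : 0 < m)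
    (hdvd : n ∣ 2 ^ m - 1) (hw1 : 1 ≤ w) (hwn : w ≤ n)
    (α : K) (hα : IsPrimitiveRoot α n)
    (x : Fin w ⊕ ZMod n → K) :
    (∀ p : MvPolynomial (Fin w ⊕ ZMod n) F2,
        (∃ k : ℕ, Delta n w ^ k * MvPolynomial.rename (emb n w) p ∈ Isig n w + IS n w) →
        MvPolynomial.aeval x p = 0) ↔
      ∃ e : ZMod n → K, isBinary e ∧ wt e = w ∧
        ∃ Z : Fin w → K, Function.Injective Z ∧
          Set.range Z = (fun u : ZMod n => α ^ u.val) '' {j | e j ≠ 0} ∧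
          (∀ i : Fin w,
            x (Sum.inl i) = MvPolynomial.aeval Z (esymm (Fin w) F2 ((i : ℕ) + 1))) ∧
          (∀ i : ZMod n, x (Sum.inr i) = ∑ j : Fin w, Z j ^ i.val) ∧
          (∀ i : ZMod n, x (Sum.inr i) = ft α e i) := by
  constructor
  · intro hx
    -- `ker (R' → L)` is the saturation `I : Δ^∞`.
    let I := Isig n w + IS n w
    let A := MvPolynomial (Vars' n w) F2 ⧸ I
    let d : A := Ideal.Quotient.mk I (Delta n w)
    let L := Localization.Away d
    let ι : MvPolynomial (Vars' n w) F2 →ₐ[F2] L :=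
      (IsScalarTower.toAlgHom F2 A L).comp (Ideal.Quotient.mkₐ F2 I)
    have hι : ∀ p, ι p = algebraMap A L (Ideal.Quotient.mk I p) := fun p => rfl
    have hιy : ∀ p, aeval (fun v => ι (X v)) p = ι p := fun p =>
      (AlgHom.congr_fun (aeval_unique ι) p).symm
    have h0 : ∀ p ∈ I, ι p = 0 := fun p hp => by
      rw [hι, Ideal.Quotient.eq_zero_iff_mem.2 hp, map_zero]
    have hu : IsUnit (ι (Delta n w)) := by
      rw [hι]; exact IsLocalization.Away.algebraMap_isUnit d
    have hint : Algebra.IsIntegral F2 L := by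
      refine isIntegral_away d fun a => ?_
      obtain ⟨p, rfl⟩ := Ideal.Quotient.mk_surjective a
      rw [← hι, ← hιy]
      exact isIntegral_of_point _ (fun p hp => by rw [hιy]; exact h0 p hp) (by rwa [hιy]) p
    let φ : MvPolynomial (Fin w ⊕ ZMod n) F2 →ₐ[F2] L := ι.comp (rename (emb n w))
    have hφ : φ.toRingHom.IsIntegral := fun l =>
      RingHom.IsIntegralElem.of_comp (f := algebraMap F2 (MvPolynomial (Fin w ⊕ ZMod n) F2)) (by
        rw [AlgHom.toRingHom_eq_coe, AlgHom.comp_algebraMap]; exact hint.isIntegral l)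
    -- The hypothesis on `x` says that it kills `I^∞_{N,w} = ker φ`.
    have hker : RingHom.ker φ.toRingHom ≤ RingHom.ker (aeval (R := F2) x).toRingHom := by
      intro p hp
      refine hx p ?_
      have hp' : algebraMap A L (Ideal.Quotient.mk I (rename (emb n w) p)) = 0 := hp
      obtain ⟨⟨_, k, rfl⟩, hk⟩ := (IsLocalization.map_eq_zero_iff (Submonoid.powers d) L _).1 hp'
      refine ⟨k, Ideal.Quotient.eq_zero_iff_mem.1 ?_⟩
      rw [map_mul, map_pow]
      exact hk
    obtain ⟨Ψ, hΨ⟩ := exists_extension_of_isIntegral φ.toRingHom hφ _ hker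
    have hΨy : ∀ p, aeval (fun v => Ψ (ι (X v))) p = Ψ (ι p) := fun p => by
      have : (aeval (R := F2) (fun v => Ψ (ι (X v)))).toRingHom = Ψ.comp ι.toRingHom :=
        MvPolynomial.ringHom_ext' (Subsingleton.elim _ _) fun v => by simp
      exact RingHom.congr_fun this p
    have hxy : ∀ v, x v = Ψ (ι (X (emb n w v))) := fun v => by
      have := RingHom.congr_fun hΨ (X v)
      simpa [φ] using this.symm
    have := exists_word_of_point hα (fun v => Ψ (ι (X v)))
      (fun p hp => by rw [hΨy, h0 p hp, map_zero]) (by rw [hΨy]; exact hu.map Ψ)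
    simp only [hxy]
    exact this
  · rintro ⟨e, -, -, Z, hinj, hrange, hσ, hS, -⟩ p ⟨k, hk⟩
    have hmem : ∀ j, ∃ u : ZMod n, α ^ u.val = Z j := fun j => by
      have : Z j ∈ (fun u : ZMod n => α ^ u.val) '' {j | e j ≠ 0} := hrange ▸ Set.mem_range_self j
      obtain ⟨u, -, hu⟩ := this
      exact ⟨u, hu⟩
    have hpow : ∀ j, Z j ^ n = 1 := fun j => by
      obtain ⟨u, hu⟩ := hmem j
      rw [← hu, ← pow_mul, mul_comm, pow_mul, hα.pow_eq_one, one_pow]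
    let y : Vars' n w → K := Sum.elim (x ∘ Sum.inl) (Sum.elim (x ∘ Sum.inr) Z)
    have h0 := (aeval_eq_zero_iff y).2 ⟨hσ, fun i _ _ => by
      refine (hS i).trans (Finset.sum_congr rfl fun j _ => ?_)
      rw [ZMod.val_natCast]
      exact (pow_eq_pow_mod i (hpow j)).symm⟩
    have hu : IsUnit (aeval y (Delta n w)) := (isUnit_aeval_Delta y).2
      ⟨fun j => isUnit_iff_ne_zero.2 fun h => by
        have := hpow j
        rw [show Z j = 0 from h, zero_pow (NeZero.ne n)] at this
        exact zero_ne_one this,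
      fun i j hij => isUnit_iff_ne_zero.2 (sub_ne_zero.2 (hinj.ne hij.ne))⟩
    have := h0 _ hk
    rw [map_mul, map_pow, (hu.pow k).mul_right_eq_zero, aeval_rename] at this
    rwa [show y ∘ emb n w = x from funext fun v => by rcases v with i | i <;> rfl] at this
end

section
/- Let Q ⊆ {0,…,n−1} be a defining set, C the cyclic code with defining set Q, d its minimum distance, and t = ⌊(d−1)/2⌋; assume w ≤ t. Then for each i ∈ {1,…,w}, there exists a polynomial q_i ∈ F_2[S_Q] such that σ_i + q_i ∈ I^∞_{N,w}. -/
/-!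
After inverting `Δ`, the coordinates `Z_j` become distinct `n`-th roots of unity: subtracting the
generators of `I_S` with indices `i` and `i + n` gives `∑ Z_j ^ i (Z_j ^ n - 1) = 0` for
`1 ≤ i ≤ w`, and the matrix of this linear system is a Vandermonde matrix whose determinant is a
unit (`rootOfUnity_of_isUnit_delta`). So the `K`-points of `I_σ + I_S` off `Δ = 0` are the
`w`-tuples of distinct `n`-th roots of unity, i.e. ordered supports of binary words of weight `w`.

Since `2w < d`, such a support is determined by the syndromes `S_i`, `i ∈ Q`
(`locators_eq_of_syndrome_eq`). Hence `σ_i` is a function of these syndromes on a finite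
Frobenius-stable set of points, and Lagrange interpolation yields a polynomial over `K` whose
coefficients are fixed by Frobenius, hence lie in `F₂` (`exists_interpolation`).

By the Nullstellensatz `σ_i + q_i` is nilpotent in `(R' / (I_σ + I_S))[1/Δ]`. The image of `R'` in
this ring is generated by the `Z_j`, and `n ∣ 2 ^ m - 1`, so all its elements satisfy
`a ^ (2 ^ m) = a` (`pow_eq_self`). It is therefore reduced, and `σ_i + q_i` vanishes in it.
-/

open MvPolynomial

/-! ### Interpolation over `F₂` -/

/-- Frobenius-equivariant interpolation: a function `f` of finitely many points `s v` with
coordinates in `F_{2^m}` is given by a polynomial over `F₂` as soon as the data are stable under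
the Frobenius `x ↦ x ^ 2`. -/
lemma exists_interpolation {ι V : Type*} [Finite ι] [Finite V] (m : ℕ) (hm : 0 < m)
    (s : V → ι → K) (f : V → K) (hs : ∀ v j, s v j ^ (2 ^ m) = s v j)
    (hsf : ∀ v v', s v = s v' → f v = f v')
    (fr : V → V) (hfs : ∀ v j, s (fr v) j = s v j ^ 2) (hff : ∀ v, f (fr v) = f v ^ 2) :
    ∃ q : MvPolynomial ι F2, ∀ v, aeval (s v) q = f v := by
  classical
  have := Fintype.ofFinite ι
  have := Fintype.ofFinite V
  have hq : 2 ^ m - 1 ≠ 0 := by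
    have := Nat.one_lt_two_pow hm.ne'
    omega
  obtain ⟨F, hF⟩ : ∃ F : (ι → K) → K, ∀ v, F (s v) = f v :=
    ⟨Function.extend s f 0, fun v =>
      Function.FactorsThrough.extend_apply (fun a b h => hsf a b h) 0 v⟩
  set T : Finset (ι → K) := Finset.univ.image s with hT
  let G : (ι → K) → MvPolynomial ι K := fun t =>
    C (F t) * ∏ j, (1 - (X j - C (t j)) ^ (2 ^ m - 1))
  let φ : (ι → K) → (ι → K) := fun t j => t j ^ 2
  have hφinj : Function.Injective φ := by
    intro a b hab
    funext j
    exact frobenius_inj K 2 (congrFun hab j)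
  have hφs : ∀ v, φ (s v) = s (fr v) := fun v => funext fun j => (hfs v j).symm
  have hφT : T.image φ = T := by
    apply Finset.eq_of_subset_of_card_le
    · intro t ht
      simp only [hT, Finset.mem_image, Finset.mem_univ, true_and] at ht ⊢
      obtain ⟨_, ⟨v, rfl⟩, rfl⟩ := ht
      exact ⟨fr v, (hφs v).symm⟩
    · rw [Finset.card_image_of_injective _ hφinj]
  -- The Lagrange interpolation polynomial over `K`.
  set P : MvPolynomial ι K := ∑ t ∈ T, G t with hP
  have hmap : map (frobenius K 2) P = P := by
    have h1 : ∀ t ∈ T, map (frobenius K 2) (G t) = G (φ t) := by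
      intro t ht
      obtain ⟨v, -, rfl⟩ := Finset.mem_image.1 ht
      simp [G, hφs, hF, hff, hfs, frobenius_def]
    rw [hP, map_sum, Finset.sum_congr rfl h1]
    conv_rhs => rw [← hφT]
    rw [Finset.sum_image (fun a _ b _ h => hφinj h)]
  have hcoef : P ∈ Set.range (map (σ := ι) (algebraMap F2 K)) := by
    rw [mem_range_map_iff_coeffs_subset]
    intro c hc
    obtain ⟨a, -, rfl⟩ := mem_coeffs_iff.1 hc
    have h2 : coeff a P ^ 2 = coeff a P := by
      have := congrArg (coeff a) hmap
      rwa [coeff_map, frobenius_def] at this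
    have h3 : coeff a P * (coeff a P - 1) = 0 := by linear_combination h2
    rcases mul_eq_zero.1 h3 with h | h
    · exact ⟨0, by rw [h, map_zero]⟩
    · exact ⟨1, by rw [sub_eq_zero.1 h, map_one]⟩
  obtain ⟨q, hqP⟩ := hcoef
  refine ⟨q, fun v => ?_⟩
  have hev : aeval (s v) q = eval (s v) P := by
    rw [← hqP, eval_map, aeval_def]
  rw [hev, hP, map_sum, Finset.sum_eq_single (s v)]
  · simp [G, hF, hq]
  · intro t ht hne
    obtain ⟨v', -, rfl⟩ := Finset.mem_image.1 ht
    obtain ⟨j, hj⟩ := Function.ne_iff.1 hne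
    have hu : s v j - s v' j ≠ 0 := sub_ne_zero.2 (Ne.symm hj)
    -- Nonzero elements of `F_{2^m}` have `(2 ^ m - 1)`-th power `1`, so factor `j` vanishes.
    have hu1 : (s v j - s v' j) ^ (2 ^ m - 1) = 1 := by
      apply mul_right_cancel₀ hu
      rw [← pow_succ, Nat.sub_add_cancel Nat.one_le_two_pow, one_mul, sub_pow_char_pow, hs, hs]
    simp only [G, map_mul, map_prod, map_sub, map_pow, map_one, eval_X, eval_C]
    rw [Finset.prod_eq_zero (Finset.mem_univ j), mul_zero]
    rw [hu1, sub_self]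
  · intro h
    exact absurd (Finset.mem_image_of_mem s (Finset.mem_univ v)) h

/-! ### The relations where `Δ` is invertible -/

lemma isUnit_of_isUnit_delta {n w : ℕ} {A : Type*} [CommRing A] [Algebra F2 A]
    (π : MvPolynomial (Vars' n w) F2 →ₐ[F2] A) (hΔ : IsUnit (π (Delta n w))) :
    (∀ j, IsUnit (π (X (Sum.inr (Sum.inr j))))) ∧
    ∀ i j : Fin w, i < j →
      IsUnit (π (X (Sum.inr (Sum.inr j))) - π (X (Sum.inr (Sum.inr i)))) := by
  rw [Delta, map_mul, IsUnit.mul_iff, map_prod, map_prod] at hΔ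
  simp only [IsUnit.prod_iff] at hΔ
  refine ⟨fun j => hΔ.1 j (Finset.mem_univ j), fun i j hij => ?_⟩
  have h := hΔ.2 (i, j) (Finset.mem_filter.2 ⟨Finset.mem_univ _, hij⟩)
  rw [map_sub] at h
  rw [← neg_sub]
  exact h.neg

/-- In any `F₂`-algebra where the relations `I_S` hold and `Δ` is invertible, the `Z_j` are
`n`-th roots of unity. -/
lemma rootOfUnity_of_isUnit_delta {n w : ℕ} {A : Type*} [CommRing A] [Algebra F2 A]
    (π : MvPolynomial (Vars' n w) F2 →ₐ[F2] A) (hΔ : IsUnit (π (Delta n w)))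
    (hJ : ∀ p ∈ Isig n w + IS n w, π p = 0) (j : Fin w) :
    π (X (Sum.inr (Sum.inr j))) ^ n = 1 := by
  obtain ⟨hz, hzz⟩ := isUnit_of_isUnit_delta π hΔ
  set z : Fin w → A := fun j => π (X (Sum.inr (Sum.inr j))) with hzdef
  have hS : ∀ i ∈ Set.Icc 1 (n + w), π (X (Sum.inr (Sum.inl (i : ZMod n)))) = ∑ j, z j ^ i := by
    intro i hi
    have := hJ _ (Ideal.mem_sup_right (Ideal.subset_span ⟨i, hi, rfl⟩))
    simpa [sub_eq_zero] using this
  have hdet : IsUnit (Matrix.vandermonde z).det := by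
    rw [Matrix.det_vandermonde]
    simp only [IsUnit.prod_iff, Finset.mem_univ, forall_true_left, Finset.mem_Ioi]
    exact fun i j hij => hzz i j hij
  have hvec : Matrix.vecMul (fun j => z j * (z j ^ n - 1)) (Matrix.vandermonde z) = 0 := by
    funext i
    have h1 := hS (i + 1) ⟨by omega, by omega⟩
    have h2 := hS (i + 1 + n) ⟨by omega, by omega⟩
    have h3 : ((i + 1 + n : ℕ) : ZMod n) = ((i + 1 : ℕ) : ZMod n) := by simp
    rw [h3, h1] at h2
    simp only [Matrix.vecMul, dotProduct, Matrix.vandermonde_apply, Pi.zero_apply]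
    rw [← sub_eq_zero.2 h2.symm, ← Finset.sum_sub_distrib]
    exact Finset.sum_congr rfl fun j _ => by ring
  have h0 : (fun j => z j * (z j ^ n - 1)) = 0 := by
    have := congrArg (fun u => Matrix.vecMul u (Matrix.vandermonde z)⁻¹) hvec
    simpa [Matrix.vecMul_vecMul, Matrix.mul_nonsing_inv _ hdet] using this
  have h1 : z j * (z j ^ n - 1) = 0 := congrFun h0 j
  exact sub_eq_zero.1 ((hz j).mul_right_eq_zero.1 h1)

/-- The syndromes are the power sums of the `Z_j`, also for the index `0`, whose generator of
`I_S` is the one with exponent `n`. -/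
lemma syndrome_eq {n w : ℕ} [NeZero n] {A : Type*} [CommRing A] [Algebra F2 A]
    (π : MvPolynomial (Vars' n w) F2 →ₐ[F2] A) (hΔ : IsUnit (π (Delta n w)))
    (hJ : ∀ p ∈ Isig n w + IS n w, π p = 0) (i : ZMod n) :
    π (X (Sum.inr (Sum.inl i))) = ∑ j : Fin w, π (X (Sum.inr (Sum.inr j))) ^ i.val := by
  have hn := NeZero.pos n
  have hlt := ZMod.val_lt i
  have hroot := rootOfUnity_of_isUnit_delta π hΔ hJ
  have key : ∀ k ∈ Set.Icc 1 (n + w), (k : ZMod n) = i →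
      (∀ j : Fin w, π (X (Sum.inr (Sum.inr j))) ^ k = π (X (Sum.inr (Sum.inr j))) ^ i.val) →
      π (X (Sum.inr (Sum.inl i))) = ∑ j : Fin w, π (X (Sum.inr (Sum.inr j))) ^ i.val := by
    intro k hk hki hpow
    have := hJ _ (Ideal.mem_sup_right (Ideal.subset_span ⟨k, hk, rfl⟩))
    simpa [sub_eq_zero, hki, hpow] using this
  rcases Nat.eq_zero_or_pos i.val with h0 | h0
  · refine key n ⟨hn, by omega⟩ ?_ fun j => ?_
    · rw [(ZMod.val_eq_zero i).1 h0, ZMod.natCast_self]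
    · rw [h0, pow_zero, hroot]
  · exact key i.val ⟨h0, by omega⟩ (ZMod.natCast_zmod_val i) fun j => rfl

lemma sigma_eq {n w : ℕ} {A : Type*} [CommRing A] [Algebra F2 A]
    (π : MvPolynomial (Vars' n w) F2 →ₐ[F2] A)
    (hJ : ∀ p ∈ Isig n w + IS n w, π p = 0) (i : Fin w) :
    π (X (Sum.inl i)) =
      aeval (fun j : Fin w => π (X (Sum.inr (Sum.inr j)))) (esymm (Fin w) F2 ((i : ℕ) + 1)) := by
  have h := hJ _ (Ideal.mem_sup_left (Ideal.subset_span ⟨i, rfl⟩))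
  rw [map_sub, sub_eq_zero] at h
  rw [h, ← AlgHom.comp_apply]
  congr 1
  ext j
  simp

/-! ### Uniqueness of decoding -/

/-- Decoding is unique up to the error-correcting radius: two `w`-tuples of distinct `n`-th roots of
unity with the same syndromes at `Q` have the same set of entries, because the sum of the
corresponding binary words is a codeword of weight at most `2w < d`. -/
lemma locators_eq_of_syndrome_eq [DecidableEq K] {n w : ℕ} [NeZero n] {α : K} (hα : IsPrimitiveRoot α n)
    {Q : Set (ZMod n)} {d : ℕ} (hwd : 2 * w < d)
    (hd : ∀ c : ZMod n → K, isBinary c → (∀ i ∈ Q, ft α c i = 0) → c ≠ 0 → d ≤ wt c)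
    {z z' : Fin w → K} (hz : Function.Injective z) (hz' : Function.Injective z')
    (hzn : ∀ j, z j ^ n = 1) (hzn' : ∀ j, z' j ^ n = 1)
    (h : ∀ i ∈ Q, ∑ j, z j ^ i.val = ∑ j, z' j ^ i.val) :
    Finset.univ.image z = Finset.univ.image z' := by
  classical
  have hlog : ∀ y : Fin w → K, Function.Injective y → (∀ j, y j ^ n = 1) →
      ∃ a : Fin w → ZMod n, Function.Injective a ∧ ∀ j, y j = α ^ (a j).val := by
    intro y hy hyn
    have : ∀ j, ∃ a : ZMod n, y j = α ^ a.val := by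
      intro j
      obtain ⟨k, hk, hk'⟩ := hα.eq_pow_of_pow_eq_one (hyn j)
      exact ⟨(k : ZMod n), by rw [ZMod.val_natCast_of_lt hk, hk']⟩
    choose a ha using this
    exact ⟨a, fun i j hij => hy (by rw [ha, ha, hij]), ha⟩
  obtain ⟨a, ha, hza⟩ := hlog z hz hzn
  obtain ⟨a', ha', hza'⟩ := hlog z' hz' hzn'
  -- The indicator word of a set of locators, whose Fourier transform is the power sums.
  let e : (Fin w → ZMod n) → ZMod n → K := fun b l => if l ∈ Finset.univ.image b then 1 else 0
  have hft : ∀ (b : Fin w → ZMod n), Function.Injective b → ∀ i : ZMod n,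
      ft α (e b) i = ∑ j, (α ^ (b j).val) ^ i.val := by
    intro b hb i
    simp only [ft, e, ite_mul, one_mul, zero_mul]
    rw [← Finset.sum_filter, Finset.filter_mem_eq_inter, Finset.univ_inter,
      Finset.sum_image (fun x _ y _ hxy => hb hxy)]
    exact Finset.sum_congr rfl fun j _ => by rw [← pow_mul, mul_comm]
  have hc : e a - e a' = 0 := by
    by_contra hne
    have hw := hd (e a - e a') ?_ ?_ hne
    · have hsub : {j | (e a - e a') j ≠ 0} ⊆
          ((Finset.univ.image a ∪ Finset.univ.image a' : Finset (ZMod n)) : Set (ZMod n)) := by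
        intro l hl
        by_contra hl'
        rw [Finset.mem_coe, Finset.mem_union, not_or] at hl'
        exact hl (by simp only [e, Pi.sub_apply, if_neg hl'.1, if_neg hl'.2, sub_zero])
      have h1 : wt (e a - e a') ≤ _ := Set.ncard_le_ncard hsub (Finset.finite_toSet _)
      rw [Set.ncard_coe_finset] at h1
      have h2 := Finset.card_union_le (Finset.univ.image a) (Finset.univ.image a')
      have h3 : (Finset.univ.image a).card ≤ w := by
        simpa using Finset.card_image_le (s := Finset.univ) (f := a)
      have h4 : (Finset.univ.image a').card ≤ w := by
        simpa using Finset.card_image_le (s := Finset.univ) (f := a')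
      omega
    · intro l
      simp only [e, Pi.sub_apply]
      have h2 : (0 : K) - 1 = 1 := by rw [zero_sub, CharTwo.neg_eq]
      split_ifs <;> simp [h2]
    · intro i hi
      have : ft α (e a - e a') i = ft α (e a) i - ft α (e a') i := by
        simp only [ft, Pi.sub_apply, sub_mul, Finset.sum_sub_distrib]
      rw [this, hft a ha, hft a' ha', sub_eq_zero]
      simpa only [hza, hza'] using h i hi
  have himg : Finset.univ.image a = Finset.univ.image a' := by
    ext l
    have h1 : e a l = e a' l := congrFun (sub_eq_zero.1 hc) l
    by_cases h2 : l ∈ Finset.univ.image a <;> by_cases h3 : l ∈ Finset.univ.image a' <;>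
      simp only [e, h2, h3, if_true, if_false, one_ne_zero, zero_ne_one] at h1 ⊢
  have h1 : z = (fun x : ZMod n => α ^ x.val) ∘ a := funext hza
  have h2 : z' = (fun x : ZMod n => α ^ x.val) ∘ a' := funext hza'
  rw [h1, h2, ← Finset.image_image, ← Finset.image_image, himg]

lemma aeval_esymm_eq_of_image_eq [DecidableEq K] {w : ℕ} {z z' : Fin w → K} (hz : Function.Injective z)
    (hz' : Function.Injective z') (h : Finset.univ.image z = Finset.univ.image z') (k : ℕ) :
    aeval z (esymm (Fin w) F2 k) = aeval z' (esymm (Fin w) F2 k) := by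
  have hval := congrArg Finset.val h
  rw [Finset.image_val_of_injOn hz.injOn, Finset.image_val_of_injOn hz'.injOn] at hval
  rw [aeval_esymm_eq_multiset_esymm, aeval_esymm_eq_multiset_esymm, hval]

/-! ### Reducedness -/

/-- In any `F₂`-algebra where the relations hold and `Δ` is invertible, values of polynomials are
fixed by the `m`-th power of Frobenius. -/
lemma pow_eq_self {n w m : ℕ} [NeZero n] (hdvd : n ∣ 2 ^ m - 1) {A : Type*} [CommRing A]
    [Algebra F2 A] [Nontrivial A]
    (π : MvPolynomial (Vars' n w) F2 →ₐ[F2] A) (hΔ : IsUnit (π (Delta n w)))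
    (hJ : ∀ p ∈ Isig n w + IS n w, π p = 0) (p : MvPolynomial (Vars' n w) F2) :
    π p ^ (2 ^ m) = π p := by
  have : CharP A 2 := charP_of_injective_algebraMap (algebraMap F2 A).injective 2
  have hroot := rootOfUnity_of_isUnit_delta π hΔ hJ
  have hZ : ∀ j : Fin w, π (X (Sum.inr (Sum.inr j))) ^ (2 ^ m) = π (X (Sum.inr (Sum.inr j))) := by
    intro j
    obtain ⟨c, hc⟩ := hdvd
    have h1 : 2 ^ m = n * c + 1 := by
      have := Nat.one_le_two_pow (n := m)
      omega
    rw [h1, pow_succ, pow_mul, hroot, one_pow, one_mul]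
  have hC : ∀ a : F2, algebraMap F2 A a ^ (2 ^ m) = algebraMap F2 A a := by
    intro a
    rw [← map_pow]
    exact congrArg _ (ZMod.pow_card_pow a)
  -- First for polynomials in the `Z_j`, which suffices as the `σ_i` and `S_i` are such polynomials.
  have hpoly : ∀ q : MvPolynomial (Fin w) F2,
      aeval (fun j : Fin w => π (X (Sum.inr (Sum.inr j)))) q ^ (2 ^ m) =
        aeval (fun j : Fin w => π (X (Sum.inr (Sum.inr j)))) q := by
    intro q
    induction q using MvPolynomial.induction_on with
    | C a => rw [aeval_C, hC]
    | add p q hp hq => rw [map_add, add_pow_char_pow, hp, hq]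
    | mul_X p j hp => rw [map_mul, mul_pow, hp, aeval_X, hZ]
  induction p using MvPolynomial.induction_on with
  | C a =>
    rw [← algebraMap_eq, AlgHom.commutes, hC]
  | add p q hp hq => rw [map_add, add_pow_char_pow, hp, hq]
  | mul_X p v hp =>
    rw [map_mul, mul_pow, hp]
    congr 1
    rcases v with i | i | j
    · rw [sigma_eq π hJ, hpoly]
    · have h := hpoly (∑ j : Fin w, X j ^ i.val)
      simp only [map_sum, map_pow, aeval_X] at h
      rw [syndrome_eq π hΔ hJ, h]
    · exact hZ j

/-! ### Existence of the formula -/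

/-- with `w ≤ t = ⌊(d−1)/2⌋`, for each `i ∈ {1,…,w}` (here `i : Fin w`
stands for `σ_(i+1)`) there is a polynomial `q_i ∈ F₂[S_Q]` with `σ_i + q_i ∈ I^∞_{N,w}`.
Membership in `I^∞_{N,w}`: some power of `Δ` times the element (viewed in `R'`)
lies in `I_σ + I_S`. -/
theorem exists_divisionFree_formula (n m w : ℕ) [NeZero n] (hodd : Odd n) (hm : 0 < m)
    (hdvd : n ∣ 2 ^ m - 1) (hw1 : 1 ≤ w) (hwn : w ≤ n)
    (α : K) (hα : IsPrimitiveRoot α n)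
    (Q : Set (ZMod n)) (d t : ℕ)
    (hd : IsLeast {v : ℕ | ∃ c : ZMod n → K,
      isBinary c ∧ (∀ i ∈ Q, ft α c i = 0) ∧ c ≠ 0 ∧ wt c = v} d)
    (ht : t = (d - 1) / 2)
    (hwt : w ≤ t)
    (i : Fin w) :
    ∃ q : MvPolynomial Q F2, ∃ k : ℕ,
      Delta n w ^ k *
          (X (Sum.inl i) +
            MvPolynomial.rename (fun j : Q => (Sum.inr (Sum.inl j.1) : Vars' n w)) q)
        ∈ Isig n w + IS n w := by
  classical
  obtain ⟨-, hdmin⟩ := hd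
  have hwd : 2 * w < d := by omega
  let V := {z : Fin w → K // Function.Injective z ∧ ∀ j, z j ^ n = 1}
  have hn := NeZero.pos n
  have : Finite V := by
    have h1 : {x : K | x ^ n = 1}.Finite := by
      refine (Polynomial.nthRootsFinset n (1 : K)).finite_toSet.subset fun x hx => ?_
      exact (Polynomial.mem_nthRootsFinset hn 1).2 hx
    exact ((Set.Finite.pi' fun _ : Fin w => h1).subset fun z hz => hz.2 :
      {z : Fin w → K | Function.Injective z ∧ ∀ j, z j ^ n = 1}.Finite)
  have hfix : ∀ x : K, x ^ n = 1 → x ^ (2 ^ m) = x := by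
    intro x hx
    obtain ⟨c, hc⟩ := hdvd
    have h1 : 2 ^ m = n * c + 1 := by
      have := Nat.one_le_two_pow (n := m)
      omega
    rw [h1, pow_succ, pow_mul, hx, one_pow, one_mul]
  obtain ⟨q, hq⟩ := exists_interpolation (ι := Q) (V := V) m hm
    (fun v j => ∑ l, v.1 l ^ j.1.val)
    (fun v => aeval v.1 (esymm (Fin w) F2 ((i : ℕ) + 1)))
    (fun v j => by
      rw [sum_pow_char_pow]
      exact Finset.sum_congr rfl fun l _ => by
        rw [← pow_mul, mul_comm, pow_mul, hfix _ (v.2.2 l)])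
    (fun v v' h => aeval_esymm_eq_of_image_eq v.2.1 v'.2.1
      (locators_eq_of_syndrome_eq hα hwd (fun c h1 h2 h3 => hdmin ⟨c, h1, h2, h3, rfl⟩)
        v.2.1 v'.2.1 v.2.2 v'.2.2 fun i hi => congrFun h ⟨i, hi⟩) _)
    (fun v => ⟨fun l => v.1 l ^ 2,
      fun a b hab => v.2.1 (frobenius_inj K 2 hab),
      fun l => by rw [← pow_mul, mul_comm, pow_mul, v.2.2 l, one_pow]⟩)
    (fun v j => by
      rw [sum_pow_char]
      exact Finset.sum_congr rfl fun l _ => by rw [← pow_mul, mul_comm, pow_mul])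
    (fun v => by
      simp only [esymm, map_sum, map_prod, aeval_X]
      rw [sum_pow_char]
      exact Finset.sum_congr rfl fun l _ => by rw [Finset.prod_pow])
  refine ⟨q, ?_⟩
  set J := Isig n w + IS n w with hJdef
  set g : MvPolynomial (Vars' n w) F2 := X (Sum.inl i) +
    MvPolynomial.rename (fun j : Q => (Sum.inr (Sum.inl j.1) : Vars' n w)) q with hg
  have hrad : Delta n w * g ∈ J.radical := by
    rw [← vanishingIdeal_zeroLocus_eq_radical (K := K), mem_vanishingIdeal_iff]
    intro x hx
    rw [map_mul]
    by_cases h0 : aeval x (Delta n w) = 0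
    · rw [h0, zero_mul]
    have hΔ : IsUnit (aeval x (Delta n w)) := isUnit_iff_ne_zero.2 h0
    have hroot := rootOfUnity_of_isUnit_delta (aeval x) hΔ hx
    have hsyn := syndrome_eq (aeval x) hΔ hx
    have hsig := sigma_eq (aeval x) hx i
    have hne := (isUnit_of_isUnit_delta (aeval x) hΔ).2
    simp only [aeval_X] at hroot hsyn hsig hne
    have hinj : Function.Injective fun j : Fin w => x (Sum.inr (Sum.inr j)) := by
      intro a b hab
      rcases lt_trichotomy a b with hl | hl | hl
      · exact absurd hab.symm (sub_ne_zero.1 (hne a b hl).ne_zero)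
      · exact hl
      · exact absurd hab (sub_ne_zero.1 (hne b a hl).ne_zero)
    have hv := hq ⟨fun j => x (Sum.inr (Sum.inr j)), hinj, hroot⟩
    have hgx : aeval x g = 0 := by
      rw [hg, map_add, aeval_X, hsig, aeval_rename, ← hv]
      have : x ∘ (fun j : Q => (Sum.inr (Sum.inl j.1) : Vars' n w)) =
          fun j : Q => ∑ l : Fin w, x (Sum.inr (Sum.inr l)) ^ j.1.val :=
        funext fun j => hsyn j.1
      rw [this, CharTwo.add_self_eq_zero]
    rw [hgx, mul_zero]
  -- `A` is the coordinate ring of the complement of `Δ = 0` in the zero locus of `J`.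
  let B := MvPolynomial (Vars' n w) F2 ⧸ J
  let δ : B := Ideal.Quotient.mk J (Delta n w)
  let A := Localization.Away δ
  let π : MvPolynomial (Vars' n w) F2 →ₐ[F2] A :=
    (IsScalarTower.toAlgHom F2 B A).comp (Ideal.Quotient.mkₐ F2 J)
  have hπ : ∀ p, π p = algebraMap B A (Ideal.Quotient.mk J p) := fun p => rfl
  have hJ0 : ∀ p ∈ J, π p = 0 := fun p hp => by
    rw [hπ, Ideal.Quotient.eq_zero_iff_mem.2 hp, map_zero]
  have hΔ : IsUnit (π (Delta n w)) := IsLocalization.Away.algebraMap_isUnit δ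
  have hg0 : π g = 0 := by
    rcases subsingleton_or_nontrivial A with hA | hA
    · exact Subsingleton.elim _ _
    obtain ⟨k, hk⟩ := hrad
    have h1 := hJ0 _ hk
    rw [map_pow, map_mul, mul_pow] at h1
    have h2 : π g ^ k = 0 := (hΔ.pow k).mul_right_eq_zero.1 h1
    have hiter : ∀ r : ℕ, π g ^ ((2 ^ m) ^ r) = π g := by
      intro r
      induction r with
      | zero => simp
      | succ r ih => rw [pow_succ, pow_mul, ih, pow_eq_self hdvd π hΔ hJ0]
    have hkle : k ≤ (2 ^ m) ^ k := (Nat.lt_pow_self (Nat.one_lt_two_pow hm.ne')).le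
    rw [← hiter k]
    exact pow_eq_zero_of_le hkle h2
  obtain ⟨⟨u, k, hk⟩, hu⟩ :=
    (IsLocalization.map_eq_zero_iff (Submonoid.powers δ) A _).1 ((hπ g).symm.trans hg0)
  refine ⟨k, ?_⟩
  rw [← Ideal.Quotient.eq_zero_iff_mem, map_mul, map_pow]
  simpa only [← hk] using hu
end

section
/- For every binary word e ∈ F_2^n of weight v with v ≤ w, if σ_1,…,σ_v ∈ K are the coefficients of the locator polynomial σ_e(Z) = 1 + Σ_{i=1}^{v} σ_i Z^i and we set σ_i = 0 for v < i ≤ w, then the point (σ_1,…,σ_w, S_0(e),…,S_{n−1}(e)) belongs to V(I_{N,w}); that is, the cyclic Newton identities S_i(e) + Σ_{j=1}^{i−1} σ_j S_{i−j}(e) + iσ_i = 0 for 1 ≤ i ≤ w and S_i(e) + Σ_{j=1}^{w} σ_j S_{i−j}(e) = 0 for w < i ≤ n + w hold, where the indices of S(e) are read modulo n. -/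
/-!
Write `P = ∏ (1 - x_u Z)` and `Q_u = P / (1 - x_u Z)`. Comparing coefficients in
`P = Q_u (1 - x_u Z)`, the sum `∑_{j<k} c_j x_u^{k-j}` (with `c_j` the coefficients of `P`)
telescopes to `x_u` times the coefficient of `Z^{k-1}` in `Q_u`. Summing over `u` and using
`P' = -∑ x_u Q_u` gives the single Newton identity
`∑_{j<k} c_j p_{k-j} + k c_k = 0` for every `k ≥ 1`, with `p_i` the power sums
(`newton_identity`).

For a binary word with locators `x_u = α^u`, the power sum `p_i` is `S_i(e)`, the reduction of
the index modulo `n` being harmless since `α^n = 1` (`ft_natCast`). As `c_0 = 1`, this is the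
identity for `i ≤ w`; for `i > w` the coefficients `c_j` with `j > w` vanish because
`deg P ≤ wt e ≤ w`.
-/

open MvPolynomial

noncomputable section

open scoped Classical in
/-- The locator polynomial `σ_e(Z) = ∏ (1 − α^u · Z)`, the product being over the
nonzero positions `u` of the (binary) word `e`. -/
def locPoly {n : ℕ} [NeZero n] (α : K) (e : ZMod n → K) : Polynomial K :=
  ∏ u ∈ Finset.univ.filter (fun j : ZMod n => e j ≠ 0),
    (1 - Polynomial.C (α ^ u.val) * Polynomial.X)

end

open Polynomial in
/-- The coefficients `q_j - x q_{j-1}` of `Q (1 - x Z)`, convolved with the powers of `x`,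
give a telescoping sum. -/
theorem sum_coeff_mul_pow {R : Type*} [CommRing R] (Q : R[X]) (x : R) (k : ℕ) :
    ∑ j ∈ Finset.range (k + 1),
        (Q * (1 - Polynomial.C x * Polynomial.X)).coeff j * x ^ (k + 1 - j)
      = x * Q.coeff k := by
  have hQ : Q * (1 - Polynomial.C x * Polynomial.X)
      = Q - Polynomial.C x * (Q * Polynomial.X) := by ring
  rw [hQ]
  induction k with
  | zero => simp [mul_comm]
  | succ k ih =>
    rw [Finset.sum_range_succ]
    have h : ∑ j ∈ Finset.range (k + 1),
          (Q - Polynomial.C x * (Q * Polynomial.X)).coeff j * x ^ (k + 1 + 1 - j)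
        = x * ∑ j ∈ Finset.range (k + 1),
          (Q - Polynomial.C x * (Q * Polynomial.X)).coeff j * x ^ (k + 1 - j) := by
      rw [Finset.mul_sum]
      refine Finset.sum_congr rfl fun j hj => ?_
      have hj' : k + 1 + 1 - j = (k + 1 - j) + 1 := by
        have := Finset.mem_range.1 hj
        omega
      rw [hj', pow_succ]
      ring
    rw [h, ih, Polynomial.coeff_sub, Polynomial.coeff_C_mul, Polynomial.coeff_mul_X,
      show k + 1 + 1 - (k + 1) = 1 by omega]
    ring

open Polynomial in
/-- Newton's identity relating the coefficients of `∏ (1 - x_u Z)` to the power sums of the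
`x_u`, for every positive index `k + 1`, even beyond the number of factors. -/
theorem newton_identity {R ι : Type*} [CommRing R] (s : Finset ι) (x : ι → R)
    (k : ℕ) :
    ∑ j ∈ Finset.range (k + 1), (∏ u ∈ s, (1 - Polynomial.C (x u) * Polynomial.X)).coeff j *
        (∑ u ∈ s, x u ^ (k + 1 - j))
      + ((k + 1 : ℕ) : R) *
        (∏ u ∈ s, (1 - Polynomial.C (x u) * Polynomial.X)).coeff (k + 1) = 0 := by
  classical
  have hder : ((k + 1 : ℕ) : R) * (∏ u ∈ s, (1 - Polynomial.C (x u) * Polynomial.X)).coeff (k + 1)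
      = -∑ u ∈ s, x u * (∏ v ∈ s.erase u, (1 - Polynomial.C (x v) * Polynomial.X)).coeff k := by
    have h := coeff_derivative (∏ u ∈ s, (1 - Polynomial.C (x u) * Polynomial.X)) k
    rw [derivative_prod_finset] at h
    simp only [derivative_sub, derivative_one, derivative_C_mul, derivative_X, zero_sub, mul_one,
      mul_neg, finsetSum_coeff, Polynomial.coeff_neg, Polynomial.coeff_mul_C,
      Finset.sum_neg_distrib] at h
    push_cast
    rw [mul_comm, ← h]
    simp only [mul_comm]
  rw [hder, add_neg_eq_zero]
  simp only [Finset.mul_sum]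
  rw [Finset.sum_comm]
  refine Finset.sum_congr rfl fun u hu => ?_
  rw [← sum_coeff_mul_pow, Finset.prod_erase_mul _ _ hu]

theorem ft_natCast {n : ℕ} [NeZero n] (α : K) (hα : α ^ n = 1) (e : ZMod n → K)
    (he : isBinary e) [DecidablePred fun j : ZMod n => e j ≠ 0] (i : ℕ) :
    ft α e (i : ZMod n)
      = ∑ u ∈ Finset.univ.filter (fun j : ZMod n => e j ≠ 0), (α ^ u.val) ^ i := by
  rw [ft, Finset.sum_filter]
  refine Finset.sum_congr rfl fun j _ => ?_
  have h : α ^ ((i : ZMod n).val * j.val) = (α ^ j.val) ^ i := by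
    rw [ZMod.val_natCast, pow_mul, ← pow_eq_pow_mod i hα, ← pow_mul, ← pow_mul, mul_comm]
  rcases he j with h0 | h1
  · simp [h0]
  · rw [h, if_pos (h1 ▸ one_ne_zero), h1, one_mul]

theorem locPoly_coeff_zero {n : ℕ} [NeZero n] (α : K) (e : ZMod n → K) :
    (locPoly α e).coeff 0 = 1 := by
  simp [locPoly, Polynomial.coeff_zero_eq_eval_zero, Polynomial.eval_prod]

theorem natDegree_locPoly_le {n : ℕ} [NeZero n] (α : K) (e : ZMod n → K) :
    (locPoly α e).natDegree ≤ wt e := by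
  classical
  have hw : wt e = (Finset.univ.filter (fun j : ZMod n => e j ≠ 0)).card := by
    rw [wt, ← Set.ncard_coe_finset]
    simp
  rw [hw, locPoly]
  refine (Polynomial.natDegree_prod_le _ _).trans ?_
  rw [Finset.card_eq_sum_ones]
  refine (Finset.sum_le_sum (g := fun _ => 1) fun u _ => ?_).trans (le_of_eq ?_)
  · compute_degree
  · congr!

/-- The Newton identities for a binary word, in the form uniform in the index `i ≥ 1`. -/
theorem newton_locPoly {n : ℕ} [NeZero n] (α : K) (hα : α ^ n = 1) (e : ZMod n → K)
    (he : isBinary e) (i : ℕ) (hi : 1 ≤ i) :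
    ft α e (i : ZMod n)
      + ∑ j ∈ Finset.Ico 1 i, (locPoly α e).coeff j * ft α e ((i - j : ℕ) : ZMod n)
      + (i : K) * (locPoly α e).coeff i = 0 := by
  classical
  obtain ⟨k, rfl⟩ : ∃ k, i = k + 1 := ⟨i - 1, by omega⟩
  have h := newton_identity (Finset.univ.filter (fun j : ZMod n => e j ≠ 0))
    (fun u => α ^ u.val) k
  simp only [← ft_natCast α hα e he] at h
  have hl : (∏ u ∈ Finset.univ.filter (fun j : ZMod n => e j ≠ 0),
      (1 - Polynomial.C (α ^ u.val) * Polynomial.X)) = locPoly α e := by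
    rw [locPoly]
  rw [hl, Finset.range_eq_Ico, Finset.sum_eq_sum_Ico_succ_bot (by omega),
    locPoly_coeff_zero, one_mul] at h
  exact h

/-- for every binary word `e` of weight `v ≤ w`, the point whose
`σ`-coordinates are the coefficients of the locator polynomial of `e` (so `σ_i = 0` for
`v < i ≤ w`) and whose `S`-coordinates are the Fourier transform of `e` lies in
`V(I_{N,w})`, i.e. the cyclic Newton identities hold. -/
theorem newtonIdentities_hold_for_binary_words (n m w : ℕ) [NeZero n] (hodd : Odd n) (hm : 0 < m)
    (hdvd : n ∣ 2 ^ m - 1) (hw1 : 1 ≤ w) (hwn : w ≤ n)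
    (α : K) (hα : IsPrimitiveRoot α n)
    (e : ZMod n → K) (he : isBinary e) (hv : wt e ≤ w) :
    ∀ p ∈ newtonIdeal n w,
      MvPolynomial.aeval
        (Sum.elim (fun i : Fin w => (locPoly α e).coeff ((i : ℕ) + 1))
          (fun i : ZMod n => ft α e i)) p = 0 := by
  have hS : ∀ i : ℕ, MvPolynomial.aeval
      (Sum.elim (fun i : Fin w => (locPoly α e).coeff ((i : ℕ) + 1))
        (fun i : ZMod n => ft α e i)) (Sv n w i) = ft α e (i : ZMod n) := by
    intro i
    simp [Sv]
  have hσ : ∀ j : ℕ, 1 ≤ j → j ≤ w → MvPolynomial.aeval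
      (Sum.elim (fun i : Fin w => (locPoly α e).coeff ((i : ℕ) + 1))
        (fun i : ZMod n => ft α e i)) (sigv n w j) = (locPoly α e).coeff j := by
    intro j h1 h2
    rw [sigv, dif_pos ⟨h1, h2⟩, MvPolynomial.aeval_X, Sum.elim_inl]
    congr 1
    exact Nat.sub_add_cancel h1
  have hc : ∀ j : ℕ, w < j → (locPoly α e).coeff j = 0 := fun j hj =>
    Polynomial.coeff_eq_zero_of_natDegree_lt
      (((natDegree_locPoly_le α e).trans hv).trans_lt hj)
  intro p hp
  rw [← RingHom.mem_ker]
  refine (Ideal.span_le.2 ?_ : newtonIdeal n w ≤ _) hp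
  rintro _ ⟨i, ⟨hi, -⟩, rfl⟩
  rw [SetLike.mem_coe, RingHom.mem_ker, newtonPoly]
  have key := newton_locPoly α hα.pow_eq_one e he i hi
  split_ifs with hiw
  · rw [map_add, map_add, map_sum, map_mul, map_natCast, hS, hσ i hi hiw, ← key]
    congr 2
    refine Finset.sum_congr rfl fun j hj => ?_
    have hj' := Finset.mem_Ico.1 hj
    rw [map_mul, hS, hσ j hj'.1 (by omega)]
  · rw [hc i (by omega), mul_zero, add_zero] at key
    rw [map_add, map_sum, hS, ← key]
    congr 1
    -- the terms with `w < j < i` vanish for degree reasons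
    refine (Finset.sum_congr rfl fun j hj => ?_).trans
      (Finset.sum_subset (fun j hj => ?_) fun j hj hj' => ?_)
    · have hj' := Finset.mem_Icc.1 hj
      rw [map_mul, hS, hσ j hj'.1 hj'.2]
    · rw [Finset.mem_Icc] at hj
      rw [Finset.mem_Ico]
      omega
    · rw [Finset.mem_Ico] at hj
      rw [Finset.mem_Icc] at hj'
      rw [hc j (by omega), zero_mul]
end
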